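/- arXiv:1201.4078 — 3 statements merged into one kernel-verified Lean document; each statement's English description precedes it below -/
import Mathlib

section
/- Let B₀ and B₁ be d×d real Hurwitz matrices with B₀ᵀ+B₀ and B₁ᵀ+B₁ negative semidefinite, and let K = ker(B₀ᵀ+B₀) ∩ ker(B₁ᵀ+B₁). Let τ > 0, let λ : [0,τ] → [0,1] be Lebesgue-measurable, and let ψ : [0,τ] → ℝ^d be continuous with ψ(t) = ψ(0) + ∫₀ᵗ B_{λ(s)} ψ(s) ds for all t ∈ [0,τ]. If there is r > 0 with ‖ψ(t)‖ = r for all t ∈ [0,τ], then ψ(t) ∈ K for all t ∈ [0,τ]. -/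
open Matrix MeasureTheory Filter Set
open scoped RealInnerProductSpace

noncomputable section

variable {d : ℕ}

/-- The convex combination `B_λ = (1-λ)•B₀ + λ•B₁`. -/
def Bmat (B₀ B₁ : Matrix (Fin d) (Fin d) ℝ) (l : ℝ) : Matrix (Fin d) (Fin d) ℝ :=
  (1 - l) • B₀ + l • B₁

/-- A real square matrix is Hurwitz if every complex eigenvalue has negative real part. -/
def IsHurwitz (B : Matrix (Fin d) (Fin d) ℝ) : Prop :=
  ∀ μ : ℂ, μ ∈ spectrum ℂ (B.map (algebraMap ℝ ℂ)) → μ.re < 0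

/-- `K = ker(B₀ᵀ+B₀) ∩ ker(B₁ᵀ+B₁)` as a subspace of `ℝ^d`. -/
def Ksub (B₀ B₁ : Matrix (Fin d) (Fin d) ℝ) : Submodule ℝ (EuclideanSpace ℝ (Fin d)) :=
  LinearMap.ker (Matrix.toEuclideanLin (B₀ᵀ + B₀)) ⊓
    LinearMap.ker (Matrix.toEuclideanLin (B₁ᵀ + B₁))

/-!
Write `A₀, A₁` for the two operators and suppose `⟪ψ t, A₁ (ψ t)⟫ < 0` at some `t`. Since the norm
is constant, the velocity, a convex combination of `A₀ ψ` and `A₁ ψ`, is almost everywhere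
orthogonal to `ψ`; both operators being dissipative, near `t` all its weight sits on `A₀`. So `ψ`
solves `ψ' = A₀ ψ` near `t`, and there `(A₀† + A₀) ψ = 0`, again because the norm is constant.
Differentiating repeatedly gives `(A₀† + A₀) A₀ᵏ ψ = 0` for all `k`, that is, `ψ t` is not observed
by `A₀† + A₀` along `A₀`. For a Hurwitz matrix this forces `ψ t = 0`: the unobservable subspace is
invariant, and an eigenvector of `A₀` in `ker (A₀† + A₀)` has a purely imaginary eigenvalue.
-/

section Observability

variable {R V W : Type*} [Semiring R] [AddCommMonoid V] [Module R V] [AddCommMonoid W] [Module R W]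

/-- The unobservable subspace of control theory: the states `x` for which the linear system
`x' = A x` with output `C x` has output vanishing to all orders. Observability of `(C, A)` is the
condition `unobservableSubspace C A = ⊥`. -/
def unobservableSubspace (C : V →ₗ[R] W) (A : Module.End R V) : Submodule R V :=
  ⨅ k : ℕ, LinearMap.ker (C ∘ₗ A ^ k)

lemma mem_unobservableSubspace {C : V →ₗ[R] W} {A : Module.End R V} {x : V} :
    x ∈ unobservableSubspace C A ↔ ∀ k : ℕ, C ((A ^ k) x) = 0 := by
  simp [unobservableSubspace]

lemma unobservableSubspace_le_ker (C : V →ₗ[R] W) (A : Module.End R V) :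
    unobservableSubspace C A ≤ LinearMap.ker C :=
  fun _ hx ↦ mem_unobservableSubspace.1 hx 0

lemma map_mem_unobservableSubspace {C : V →ₗ[R] W} {A : Module.End R V} {x : V}
    (hx : x ∈ unobservableSubspace C A) : A x ∈ unobservableSubspace C A :=
  mem_unobservableSubspace.2 fun k ↦ by
    simpa [pow_succ] using mem_unobservableSubspace.1 hx (k + 1)

/-- One direction of the Popov–Belevitch–Hautus test. -/
lemma exists_hasEigenvector_mem_ker_of_unobservableSubspace_ne_bot {K V W : Type*}
    [Field K] [IsAlgClosed K] [AddCommGroup V] [Module K V] [FiniteDimensional K V]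
    [AddCommMonoid W] [Module K W] {C : V →ₗ[K] W} {A : Module.End K V}
    (h : unobservableSubspace C A ≠ ⊥) :
    ∃ μ v, A.HasEigenvector μ v ∧ C v = 0 := by
  have : Nontrivial (unobservableSubspace C A) := Submodule.nontrivial_iff_ne_bot.2 h
  obtain ⟨μ, hμ⟩ := Module.End.exists_eigenvalue
    (A.restrict fun _ ↦ map_mem_unobservableSubspace (C := C))
  obtain ⟨v, hv⟩ := hμ.exists_hasEigenvector
  refine ⟨μ, v, ⟨Module.End.mem_eigenspace_iff.2 (congrArg Subtype.val hv.apply_eq_smul), ?_⟩,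
    unobservableSubspace_le_ker C A v.2⟩
  exact fun h0 ↦ hv.2 (Subtype.ext h0)

end Observability

section ImaginaryAxis

variable {n : Type*} [Fintype n]

lemma re_eq_zero_of_mulVec_eq_smul {M : Matrix n n ℂ} {μ : ℂ} {z : n → ℂ} (hz : z ≠ 0)
    (hμ : M *ᵥ z = μ • z) (hker : (Mᴴ + M) *ᵥ z = 0) : μ.re = 0 := by
  have hform : (star μ + μ) * (star z ⬝ᵥ z) = 0 := by
    calc (star μ + μ) * (star z ⬝ᵥ z) = star (M *ᵥ z) ⬝ᵥ z + star z ⬝ᵥ (M *ᵥ z) := by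
          simp [hμ, add_mul]
      _ = star z ⬝ᵥ ((Mᴴ + M) *ᵥ z) := by
          rw [add_mulVec, dotProduct_add, star_mulVec, ← dotProduct_mulVec]
      _ = 0 := by rw [hker, dotProduct_zero]
  have hnorm : star z ⬝ᵥ z ≠ 0 := by
    open scoped ComplexOrder in rwa [Ne, dotProduct_star_self_eq_zero]
  simpa using congrArg Complex.re ((mul_eq_zero.1 hform).resolve_right hnorm)

lemma unobservableSubspace_toLin'_eq_bot [DecidableEq n] {M : Matrix n n ℂ}
    (hM : ∀ μ ∈ spectrum ℂ M, μ.re ≠ 0) :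
    unobservableSubspace (toLin' (Mᴴ + M)) (toLin' M) = ⊥ := by
  by_contra h
  obtain ⟨μ, z, hz, hker⟩ := exists_hasEigenvector_mem_ker_of_unobservableSubspace_ne_bot h
  have hspec : μ ∈ spectrum ℂ M := by
    rw [← spectrum_toLin']
    exact (Module.End.hasEigenvalue_of_hasEigenvector hz).mem_spectrum
  exact hM μ hspec (re_eq_zero_of_mulVec_eq_smul hz.2 hz.apply_eq_smul hker)

end ImaginaryAxis

open scoped InnerProduct Topology

section Primitive

variable {E : Type*} [NormedAddCommGroup E] [NormedSpace ℝ E] {a b t : ℝ} {ψ v : ℝ → E}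

lemma continuousOn_of_eq_add_integral (hab : a ≤ b) (hv : IntervalIntegrable v volume a b)
    (hψ : ∀ t ∈ Icc a b, ψ t = ψ a + ∫ s in a..t, v s) : ContinuousOn ψ (Icc a b) := by
  have hcont := intervalIntegral.continuousOn_primitive_interval' hv left_mem_uIcc
  rw [uIcc_of_le hab] at hcont
  exact (continuousOn_const.add hcont).congr hψ

lemma hasDerivAt_of_hasDerivAt_integral (hψ : ∀ t ∈ Icc a b, ψ t = ψ a + ∫ s in a..t, v s)
    (ht : t ∈ Ioo a b) {c : E} (h : HasDerivAt (fun u ↦ ∫ s in a..u, v s) c t) :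
    HasDerivAt ψ c t := by
  refine (h.const_add (ψ a)).congr_of_eventuallyEq ?_
  filter_upwards [Icc_mem_nhds ht.1 ht.2] with s hs using hψ s hs

variable [CompleteSpace E]

lemma ae_hasDerivAt_of_eq_add_integral (hv : IntervalIntegrable v volume a b)
    (hψ : ∀ t ∈ Icc a b, ψ t = ψ a + ∫ s in a..t, v s) :
    ∀ᵐ t, t ∈ Ioo a b → HasDerivAt ψ (v t) t := by
  filter_upwards [hv.ae_hasDerivAt_integral] with t hderiv ht
  exact hasDerivAt_of_hasDerivAt_integral hψ ht
    (hderiv (Icc_subset_uIcc (Ioo_subset_Icc_self ht)) a left_mem_uIcc)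

lemma hasDerivAt_of_eq_add_integral_of_tendsto_ae (hv : IntervalIntegrable v volume a b)
    (hψ : ∀ t ∈ Icc a b, ψ t = ψ a + ∫ s in a..t, v s) (ht : t ∈ Ioo a b) {c : E}
    (hc : Tendsto v (𝓝 t ⊓ ae volume) (𝓝 c)) : HasDerivAt ψ c t := by
  have hab : a ≤ b := (ht.1.trans ht.2).le
  have hint : IntervalIntegrable v volume a t :=
    hv.mono_set (uIcc_subset_uIcc_left (Icc_subset_uIcc (Ioo_subset_Icc_self ht)))
  have hmeas : StronglyMeasurableAtFilter v (𝓝 t) :=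
    ⟨Ioc a b, Ioc_mem_nhds ht.1 ht.2,
      ((intervalIntegrable_iff_integrableOn_Ioc_of_le hab).1 hv).aestronglyMeasurable⟩
  exact hasDerivAt_of_hasDerivAt_integral hψ ht
    (intervalIntegral.integral_hasDerivAt_of_tendsto_ae_right hint hmeas hc)

end Primitive

section LinearODE

variable {E F : Type*} [NormedAddCommGroup E] [NormedSpace ℝ E] [NormedAddCommGroup F]
  [NormedSpace ℝ F] {A : E →L[ℝ] E} {C : E →L[ℝ] F} {ψ : ℝ → E} {t : ℝ}

lemma eventually_apply_apply_eq_zero_of_hasDerivAt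
    (hode : ∀ᶠ s in 𝓝 t, HasDerivAt ψ (A (ψ s)) s) (hC : ∀ᶠ s in 𝓝 t, C (ψ s) = 0) :
    ∀ᶠ s in 𝓝 t, C (A (ψ s)) = 0 := by
  filter_upwards [hode, hC.eventually_nhds] with s hs hzero
  exact (C.hasFDerivAt.comp_hasDerivAt s hs).unique
    ((hasDerivAt_const s 0).congr_of_eventuallyEq hzero)

lemma mem_unobservableSubspace_of_hasDerivAt
    (hode : ∀ᶠ s in 𝓝 t, HasDerivAt ψ (A (ψ s)) s) (hC : ∀ᶠ s in 𝓝 t, C (ψ s) = 0) :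
    ψ t ∈ unobservableSubspace (C : E →ₗ[ℝ] F) (A : E →ₗ[ℝ] E) := by
  rw [mem_unobservableSubspace]
  intro k
  induction k generalizing C with
  | zero => exact hC.self_of_nhds
  | succ k ih =>
    have hCA : ∀ᶠ s in 𝓝 t, (C ∘L A) (ψ s) = 0 :=
      eventually_apply_apply_eq_zero_of_hasDerivAt hode hC
    simpa [pow_succ'] using ih hCA

end LinearODE

section Dissipative

variable {E : Type*} [NormedAddCommGroup E] [InnerProductSpace ℝ E]

lemma inner_eq_zero_of_hasDerivAt_of_norm_eq {ψ : ℝ → E} {w : E} {t r : ℝ}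
    (hψ : HasDerivAt ψ w t) (hnorm : ∀ᶠ s in 𝓝 t, ‖ψ s‖ = r) : ⟪ψ t, w⟫ = 0 := by
  have hconst : HasDerivAt (‖ψ ·‖ ^ 2) 0 t :=
    (hasDerivAt_const t (r ^ 2)).congr_of_eventuallyEq <| hnorm.mono fun s hs ↦ by simp [hs]
  simpa using hψ.norm_sq.unique hconst

lemma eq_left_of_mem_segment_of_inner_eq_zero {x u w z : E} (hu : ⟪x, u⟫ ≤ 0) (hw : ⟪x, w⟫ < 0)
    (hz : z ∈ segment ℝ u w) (hxz : ⟪x, z⟫ = 0) : z = u := by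
  obtain ⟨α, β, hα, hβ, hαβ, rfl⟩ := hz
  rw [inner_add_right, inner_smul_right, inner_smul_right] at hxz
  have hβ0 : β = 0 := by
    by_contra hne
    have hpos : 0 < β := lt_of_le_of_ne hβ (Ne.symm hne)
    linarith [mul_nonpos_of_nonneg_of_nonpos hα hu, mul_neg_of_pos_of_neg hpos hw]
  obtain rfl : α = 1 := by linarith
  simp [hβ0]

variable [CompleteSpace E] {A A₀ A₁ : E →L[ℝ] E}

lemma adjoint_add_self_apply_eq_zero (hA : ∀ x, ⟪x, A x⟫ ≤ 0) {x : E} (hx : ⟪x, A x⟫ = 0) :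
    (A† + A) x = 0 := by
  have hmax : IsLocalMax (fun y ↦ ⟪y, A y⟫) x := Eventually.of_forall fun y ↦ by
    simpa only [hx] using hA y
  have hderiv := hmax.hasFDerivAt_eq_zero ((hasFDerivAt_id x).inner ℝ A.hasFDerivAt)
  refine ext_inner_right ℝ fun y ↦ ?_
  have hy := DFunLike.congr_fun hderiv y
  simpa [inner_add_left, ContinuousLinearMap.adjoint_inner_left, real_inner_comm] using hy

section Trajectory

variable {a b r : ℝ} {ψ v : ℝ → E}

lemma ae_eq_left_of_norm_eq (hA₀ : ∀ x, ⟪x, A₀ x⟫ ≤ 0) (hv : IntervalIntegrable v volume a b)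
    (hseg : ∀ᵐ t, t ∈ Ioo a b → v t ∈ segment ℝ (A₀ (ψ t)) (A₁ (ψ t)))
    (hψ : ∀ t ∈ Icc a b, ψ t = ψ a + ∫ s in a..t, v s) (hnorm : ∀ t ∈ Icc a b, ‖ψ t‖ = r) :
    ∀ᵐ t, t ∈ Ioo a b → ⟪ψ t, A₁ (ψ t)⟫ < 0 → v t = A₀ (ψ t) := by
  filter_upwards [hseg, ae_hasDerivAt_of_eq_add_integral hv hψ] with t hmem hderiv ht hneg
  refine eq_left_of_mem_segment_of_inner_eq_zero (hA₀ _) hneg (hmem ht) ?_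
  refine inner_eq_zero_of_hasDerivAt_of_norm_eq (hderiv ht) (r := r) ?_
  filter_upwards [Icc_mem_nhds ht.1 ht.2] with s hs using hnorm s hs

lemma inner_apply_eq_zero_of_norm_eq_of_mem_Ioo (hA₀ : ∀ x, ⟪x, A₀ x⟫ ≤ 0)
    (hA₁ : ∀ x, ⟪x, A₁ x⟫ ≤ 0)
    (hobs : unobservableSubspace (A₀† + A₀ : E →L[ℝ] E).toLinearMap A₀.toLinearMap = ⊥)
    (hv : IntervalIntegrable v volume a b)
    (hseg : ∀ᵐ t, t ∈ Ioo a b → v t ∈ segment ℝ (A₀ (ψ t)) (A₁ (ψ t)))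
    (hψ : ∀ t ∈ Icc a b, ψ t = ψ a + ∫ s in a..t, v s) (hnorm : ∀ t ∈ Icc a b, ‖ψ t‖ = r)
    {t : ℝ} (ht : t ∈ Ioo a b) : ⟪ψ t, A₁ (ψ t)⟫ = 0 := by
  by_contra hne
  have hcont {s : ℝ} (hs : s ∈ Ioo a b) : ContinuousAt ψ s :=
    (continuousOn_of_eq_add_integral (ht.1.trans ht.2).le hv hψ).continuousAt
      (Icc_mem_nhds hs.1 hs.2)
  have hnear : ∀ᶠ s in 𝓝 t, s ∈ Ioo a b ∧ ⟪ψ s, A₁ (ψ s)⟫ < 0 :=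
    Eventually.and (Ioo_mem_nhds ht.1 ht.2) <|
      ((hcont ht).inner (A₁.continuous.continuousAt.comp (hcont ht))).eventually_lt_const
        (lt_of_le_of_ne (hA₁ _) hne)
  have hode : ∀ᶠ s in 𝓝 t, HasDerivAt ψ (A₀ (ψ s)) s := by
    filter_upwards [hnear, hnear.eventually_nhds] with s hs hnear_s
    have hlim : Tendsto (A₀ ∘ ψ) (𝓝 s ⊓ ae volume) (𝓝 (A₀ (ψ s))) :=
      (A₀.continuous.continuousAt.comp (hcont hs.1)).tendsto.mono_left inf_le_left
    refine hasDerivAt_of_eq_add_integral_of_tendsto_ae hv hψ hs.1 (hlim.congr' ?_)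
    filter_upwards [mem_inf_of_left hnear_s,
      mem_inf_of_right (ae_eq_left_of_norm_eq hA₀ hv hseg hψ hnorm)] with u hu hvu
    exact (hvu hu.1 hu.2).symm
  have hker : ∀ᶠ s in 𝓝 t, (A₀† + A₀) (ψ s) = 0 := by
    filter_upwards [hode, hnear] with s hs hnear_s
    refine adjoint_add_self_apply_eq_zero hA₀
      (inner_eq_zero_of_hasDerivAt_of_norm_eq hs (r := r) ?_)
    filter_upwards [Icc_mem_nhds hnear_s.1.1 hnear_s.1.2] with u hu using hnorm u hu
  have hzero : ψ t = 0 := by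
    rw [← Submodule.mem_bot ℝ, ← hobs]
    exact mem_unobservableSubspace_of_hasDerivAt hode hker
  exact hne (by simp [hzero])

lemma adjoint_add_self_apply_eq_zero_of_norm_eq (hA₀ : ∀ x, ⟪x, A₀ x⟫ ≤ 0)
    (hA₁ : ∀ x, ⟪x, A₁ x⟫ ≤ 0)
    (hobs : unobservableSubspace (A₀† + A₀ : E →L[ℝ] E).toLinearMap A₀.toLinearMap = ⊥)
    (hab : a < b) (hv : IntervalIntegrable v volume a b)
    (hseg : ∀ᵐ t, t ∈ Ioo a b → v t ∈ segment ℝ (A₀ (ψ t)) (A₁ (ψ t)))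
    (hψ : ∀ t ∈ Icc a b, ψ t = ψ a + ∫ s in a..t, v s) (hnorm : ∀ t ∈ Icc a b, ‖ψ t‖ = r) :
    ∀ t ∈ Icc a b, (A₁† + A₁) (ψ t) = 0 := by
  have hcont : ContinuousOn ψ (Icc a b) := continuousOn_of_eq_add_integral hab.le hv hψ
  have hIoo : EqOn (fun t ↦ (A₁† + A₁) (ψ t)) 0 (Ioo a b) := fun t ht ↦
    adjoint_add_self_apply_eq_zero hA₁
      (inner_apply_eq_zero_of_norm_eq_of_mem_Ioo hA₀ hA₁ hobs hv hseg hψ hnorm ht)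
  exact hIoo.of_subset_closure ((A₁† + A₁).continuous.comp_continuousOn hcont) continuousOn_const
    Ioo_subset_Icc_self (closure_Ioo hab.ne).ge

theorem constant_norm_trajectory_mem_K_general (hA₀ : ∀ x, ⟪x, A₀ x⟫ ≤ 0)
    (hA₁ : ∀ x, ⟪x, A₁ x⟫ ≤ 0)
    (hobs₀ : unobservableSubspace (A₀† + A₀ : E →L[ℝ] E).toLinearMap A₀.toLinearMap = ⊥)
    (hobs₁ : unobservableSubspace (A₁† + A₁ : E →L[ℝ] E).toLinearMap A₁.toLinearMap = ⊥)
    (hab : a < b) (hv : IntervalIntegrable v volume a b)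
    (hseg : ∀ᵐ t, t ∈ Ioo a b → v t ∈ segment ℝ (A₀ (ψ t)) (A₁ (ψ t)))
    (hψ : ∀ t ∈ Icc a b, ψ t = ψ a + ∫ s in a..t, v s) (hnorm : ∀ t ∈ Icc a b, ‖ψ t‖ = r) :
    ∀ t ∈ Icc a b, ψ t ∈ (A₀† + A₀).ker ⊓ (A₁† + A₁).ker := fun t ht ↦
  ⟨adjoint_add_self_apply_eq_zero_of_norm_eq hA₁ hA₀ hobs₁ hab hv
      (by simpa only [segment_symm] using hseg) hψ hnorm t ht,
    adjoint_add_self_apply_eq_zero_of_norm_eq hA₀ hA₁ hobs₀ hab hv hseg hψ hnorm t ht⟩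

end Trajectory

end Dissipative

section Matrix

variable {n : Type*} [Fintype n] [DecidableEq n]

lemma adjoint_toEuclideanCLM_add_self (B : Matrix n n ℝ) :
    (toEuclideanCLM (𝕜 := ℝ) B)† + toEuclideanCLM (𝕜 := ℝ) B =
      toEuclideanCLM (𝕜 := ℝ) (Bᵀ + B) := by
  rw [map_add, ← conjTranspose_eq_transpose_of_trivial, ← star_eq_conjTranspose, map_star,
    ContinuousLinearMap.star_eq_adjoint]

lemma inner_toEuclideanCLM_self_nonpos {B : Matrix n n ℝ}
    (hB : ∀ x : n → ℝ, x ⬝ᵥ ((Bᵀ + B) *ᵥ x) ≤ 0) (x : EuclideanSpace ℝ n) :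
    ⟪x, toEuclideanCLM (𝕜 := ℝ) B x⟫ ≤ 0 := by
  have hsym : ⟪x, toEuclideanCLM (𝕜 := ℝ) (Bᵀ + B) x⟫ = 2 * ⟪x, toEuclideanCLM (𝕜 := ℝ) B x⟫ := by
    rw [← adjoint_toEuclideanCLM_add_self, _root_.add_apply, inner_add_right,
      ContinuousLinearMap.adjoint_inner_right, real_inner_comm, two_mul]
  have hform := hB x.ofLp
  rw [← inner_toEuclideanCLM, hsym] at hform
  linarith

end Matrix

lemma IsHurwitz.unobservableSubspace_toEuclideanCLM_eq_bot {B : Matrix (Fin d) (Fin d) ℝ}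
    (hB : IsHurwitz B) :
    unobservableSubspace
      ((toEuclideanCLM (𝕜 := ℝ) B)† + toEuclideanCLM (𝕜 := ℝ) B).toLinearMap
      (toEuclideanCLM (𝕜 := ℝ) B).toLinearMap = ⊥ := by
  rw [adjoint_toEuclideanCLM_add_self, Submodule.eq_bot_iff]
  intro x hx
  set M := B.map (algebraMap ℝ ℂ) with hM
  set z : Fin d → ℂ := algebraMap ℝ ℂ ∘ x.ofLp with hzx
  have hsym : Mᴴ + M = (Bᵀ + B).map (algebraMap ℝ ℂ) := by
    ext i j
    simp [hM]
  have hmulVec (k : ℕ) :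
      (Mᴴ + M) *ᵥ M ^ k *ᵥ z = algebraMap ℝ ℂ ∘ ((Bᵀ + B) *ᵥ B ^ k *ᵥ x.ofLp) := by
    have hpow : M ^ k = (B ^ k).map (algebraMap ℝ ℂ) :=
      (map_pow (algebraMap ℝ ℂ).mapMatrix B k).symm
    simp only [hsym, hpow, mulVec_mulVec, ← Matrix.map_mul]
    exact funext fun i ↦ ((algebraMap ℝ ℂ).map_mulVec _ _ i).symm
  have hz : z ∈ unobservableSubspace (toLin' (Mᴴ + M)) (toLin' M) := by
    rw [mem_unobservableSubspace] at hx ⊢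
    intro k
    have hk : (Bᵀ + B) *ᵥ B ^ k *ᵥ x.ofLp = 0 := by
      have hxk := congrArg WithLp.ofLp (hx k)
      rwa [← ContinuousLinearMap.toLinearMap_pow, ← map_pow] at hxk
    rw [← toLin'_pow, toLin'_apply, toLin'_apply, hmulVec, hk]
    ext
    simp
  rw [unobservableSubspace_toLin'_eq_bot fun μ hμ ↦ (hB μ hμ).ne, Submodule.mem_bot] at hz
  ext i
  simpa [hzx] using congrFun hz i

lemma Ksub_eq_ker_inf_ker (B₀ B₁ : Matrix (Fin d) (Fin d) ℝ) :
    Ksub B₀ B₁ =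
      ((toEuclideanCLM (𝕜 := ℝ) B₀)† + toEuclideanCLM (𝕜 := ℝ) B₀).ker ⊓
        ((toEuclideanCLM (𝕜 := ℝ) B₁)† + toEuclideanCLM (𝕜 := ℝ) B₁).ker := by
  rw [adjoint_toEuclideanCLM_add_self, adjoint_toEuclideanCLM_add_self]
  rfl

lemma toEuclideanLin_Bmat_apply (B₀ B₁ : Matrix (Fin d) (Fin d) ℝ) (l : ℝ)
    (x : EuclideanSpace ℝ (Fin d)) :
    toEuclideanLin (Bmat B₀ B₁ l) x =
      AffineMap.lineMap (toEuclideanCLM (𝕜 := ℝ) B₀ x) (toEuclideanCLM (𝕜 := ℝ) B₁ x) l := by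
  simp [Bmat, AffineMap.lineMap_apply_module, ← coe_toEuclideanCLM_eq_toEuclideanLin]

lemma intervalIntegrable_lineMap {E : Type*} [NormedAddCommGroup E] [NormedSpace ℝ E]
    {μ : Measure ℝ} {a b : ℝ} {f g : ℝ → E} {c : ℝ → ℝ} (hf : IntervalIntegrable f μ a b)
    (hg : IntervalIntegrable g μ a b) (hc : AEStronglyMeasurable c (μ.restrict (uIoc a b)))
    (hc01 : ∀ t ∈ uIoc a b, c t ∈ Icc (0 : ℝ) 1) :
    IntervalIntegrable (fun t ↦ AffineMap.lineMap (f t) (g t) (c t)) μ a b := by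
  simp only [AffineMap.lineMap_apply, vsub_eq_sub, vadd_eq_add]
  refine IntervalIntegrable.add ?_ hf
  rw [intervalIntegrable_iff]
  refine (hg.sub hf).def'.bdd_smul 1 hc ?_
  refine ae_restrict_of_forall_mem measurableSet_uIoc fun t ht ↦ ?_
  rw [Real.norm_of_nonneg (hc01 t ht).1]
  exact (hc01 t ht).2

/-- Lemma `Inter`. Let `B₀, B₁` be Hurwitz with `B₀ᵀ+B₀`, `B₁ᵀ+B₁`
negative semidefinite. If `ψ` solves `ψ̇ = B_{λ(t)}ψ` on `[0,τ]` for a measurable input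
`λ : [0,τ] → [0,1]` and `‖ψ(t)‖ = r > 0` is constant on `[0,τ]`, then `ψ(t) ∈ K` for
all `t ∈ [0,τ]`. -/
theorem constant_norm_trajectory_mem_K (B₀ B₁ : Matrix (Fin d) (Fin d) ℝ)
    (hH₀ : IsHurwitz B₀) (hH₁ : IsHurwitz B₁)
    (h₀ : ∀ x : Fin d → ℝ, x ⬝ᵥ ((B₀ᵀ + B₀) *ᵥ x) ≤ 0)
    (h₁ : ∀ x : Fin d → ℝ, x ⬝ᵥ ((B₁ᵀ + B₁) *ᵥ x) ≤ 0)
    (τ : ℝ) (hτ : 0 < τ) (lam : ℝ → ℝ) (hlam : Measurable lam)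
    (hlam01 : ∀ t ∈ Icc 0 τ, lam t ∈ Icc (0:ℝ) 1)
    (ψ : ℝ → EuclideanSpace ℝ (Fin d)) (hψc : ContinuousOn ψ (Icc 0 τ))
    (hψ : ∀ t ∈ Icc 0 τ,
      ψ t = ψ 0 + ∫ s in (0:ℝ)..t, Matrix.toEuclideanLin (Bmat B₀ B₁ (lam s)) (ψ s))
    (r : ℝ) (hr : 0 < r) (hnorm : ∀ t ∈ Icc 0 τ, ‖ψ t‖ = r) :
    ∀ t ∈ Icc 0 τ, ψ t ∈ Ksub B₀ B₁ := by
  have hint (B : Matrix (Fin d) (Fin d) ℝ) :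
      IntervalIntegrable (fun s ↦ toEuclideanCLM (𝕜 := ℝ) B (ψ s)) volume 0 τ :=
    ((toEuclideanCLM (𝕜 := ℝ) B).continuous.comp_continuousOn hψc).intervalIntegrable_of_Icc hτ.le
  have hlam_uIoc : ∀ t ∈ uIoc 0 τ, lam t ∈ Icc (0 : ℝ) 1 := fun t ht ↦
    hlam01 t (Ioc_subset_Icc_self (uIoc_of_le hτ.le ▸ ht))
  rw [Ksub_eq_ker_inf_ker]
  exact constant_norm_trajectory_mem_K_general (inner_toEuclideanCLM_self_nonpos h₀)
    (inner_toEuclideanCLM_self_nonpos h₁) hH₀.unobservableSubspace_toEuclideanCLM_eq_bot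
    hH₁.unobservableSubspace_toEuclideanCLM_eq_bot hτ
    (intervalIntegrable_lineMap (hint B₀) (hint B₁) hlam.aestronglyMeasurable hlam_uIoc)
    (.of_forall fun t ht ↦ lineMap_mem_segment ℝ _ _ (hlam01 t (Ioo_subset_Icc_self ht)))
    (by simpa only [toEuclideanLin_Bmat_apply] using hψ) hnorm

end
end

section
/- Let C₀ and C₁ be k'×k real matrices and let D₀ and D₁ be k'×k' real matrices with D₀ᵀ+D₀ and D₁ᵀ+D₁ negative definite. Consider the (k+k')×(k+k') block matrices B₀ = [[0, −C₀ᵀ],[C₀, D₀]] and B₁ = [[0, −C₁ᵀ],[C₁, D₁]]. Then the switched system defined by {B₀, B₁} is GUAS if and only if for every λ ∈ [0,1] the matrix C_λ := (1−λ)C₀ + λC₁ has trivial kernel (is one-to-one as a map ℝ^k → ℝ^{k'}). -/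
open Matrix MeasureTheory

noncomputable section

/-- The switched system defined by `{B₀, B₁}` is GUAS: for every measurable switching
law `u : [0,∞) → {0,1}` and every initial condition, the solution of `ẋ = B_{u(t)}x`
tends to `0` at `+∞`. -/
def IsGUAS {n : Type*} [Fintype n] [DecidableEq n] (B₀ B₁ : Matrix n n ℝ) : Prop :=
  ∀ u : ℝ → Fin 2, Measurable u →
    ∀ X : EuclideanSpace ℝ n, ∀ Φ : ℝ → EuclideanSpace ℝ n, Continuous Φ →
      (∀ t : ℝ, 0 ≤ t →
        Φ t = X + ∫ s in (0:ℝ)..t, Matrix.toEuclideanLin (![B₀, B₁] (u s)) (Φ s)) →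
      Filter.Tendsto Φ Filter.atTop (nhds 0)

/-!
All the dissipation of `ẋ = [[0, -Cᵀ], [C, D]] x` acts on the second block, `⟪z, Bz⟫ = ⟪y, Dy⟫`
for `z = (x, y)`. Hence `‖Φ‖` decreases along a solution and `y → 0`; since the derivative of the
first block is linear in `y`, `Φ` is nearly constant on `[t, t + 1]` for `t` large. Integrating the
equation over `[t, t + 1]` then shows that the mean of the modes nearly annihilates `Φ t`. This mean
lies in the segment between the two modes, whose elements are injective as soon as every `C_l` is,
and by compactness they are so uniformly: `Φ t → 0`.

Conversely, if `C_l x = 0` then `(x, 0)` is an equilibrium of the averaged system. Switching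
periodically, with duty cycle `l` and faster and faster as time goes on, the solution starting from
`(x, 0)` stays close to it.
-/

section EnergyInequality

open Set

open scoped RealInnerProductSpace

theorem absolutelyContinuousOnInterval_of_dist_le {X Y : Type*} [PseudoMetricSpace X]
    [PseudoMetricSpace Y] {f : ℝ → X} {g : ℝ → Y} {a b : ℝ}
    (hg : AbsolutelyContinuousOnInterval g a b)
    (hfg : ∀ s ∈ uIcc a b, ∀ t ∈ uIcc a b, dist (f s) (f t) ≤ dist (g s) (g t)) :
    AbsolutelyContinuousOnInterval f a b := by
  rw [absolutelyContinuousOnInterval_iff] at hg ⊢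
  intro ε hε
  obtain ⟨δ, hδ, h⟩ := hg ε hε
  refine ⟨δ, hδ, fun S hS hSδ => (Finset.sum_le_sum fun i hi => ?_).trans_lt (h S hS hSδ)⟩
  exact hfg _ (hS.1 i hi).1 _ (hS.1 i hi).2

variable {E : Type*} [NormedAddCommGroup E] [InnerProductSpace ℝ E] {f : ℝ → E} {a b : ℝ}

theorem absolutelyContinuousOnInterval_norm_add_integral (hf : IntervalIntegrable f volume a b)
    (x : E) : AbsolutelyContinuousOnInterval (fun t => ‖x + ∫ s in a..t, f s‖) a b := by
  refine absolutelyContinuousOnInterval_of_dist_le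
    (hf.norm.absolutelyContinuousOnInterval_intervalIntegral left_mem_uIcc) fun s hs t ht => ?_
  have integrable_on {r r' : ℝ} (hr : r ∈ uIcc a b) (hr' : r' ∈ uIcc a b) :
      IntervalIntegrable f volume r r' := hf.mono_set (uIcc_subset_uIcc hr hr')
  have has := integrable_on left_mem_uIcc hs
  have hat := integrable_on left_mem_uIcc ht
  calc dist ‖x + ∫ r in a..s, f r‖ ‖x + ∫ r in a..t, f r‖
      ≤ ‖∫ r in t..s, f r‖ := by
        rw [Real.dist_eq, ← intervalIntegral.integral_interval_sub_left has hat]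
        exact (abs_norm_sub_norm_le _ _).trans_eq (by rw [add_sub_add_left_eq_sub])
    _ ≤ |∫ r in t..s, ‖f r‖| := intervalIntegral.norm_integral_le_abs_integral_norm
    _ = dist (∫ r in a..s, ‖f r‖) (∫ r in a..t, ‖f r‖) := by
        rw [Real.dist_eq, intervalIntegral.integral_interval_sub_left has.norm hat.norm]

theorem norm_add_integral_sq_sub_norm_sq_le [CompleteSpace E] {g : ℝ → ℝ} (hab : a ≤ b)
    (hf : IntervalIntegrable f volume a b) (hg : IntervalIntegrable g volume a b) (x : E)
    (hfg : ∀ t ∈ Icc a b, 2 * ⟪x + ∫ s in a..t, f s, f t⟫ ≤ g t) :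
    ‖x + ∫ s in a..b, f s‖ ^ 2 - ‖x‖ ^ 2 ≤ ∫ t in a..b, g t := by
  set V : ℝ → ℝ := fun t => ‖x + ∫ s in a..t, f s‖ ^ 2 with hV
  have hV_ac : AbsolutelyContinuousOnInterval V a b := by
    have h := absolutelyContinuousOnInterval_norm_add_integral hf x
    simpa only [hV, sq] using h.fun_mul h
  have hV_deriv : ∀ᵐ t, t ∈ Icc a b → deriv V t ≤ g t := by
    filter_upwards [hf.ae_hasDerivAt_integral] with t ht htab
    have hderiv := ((ht (uIcc_of_le hab ▸ htab) a left_mem_uIcc).const_add x).norm_sq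
    exact hderiv.deriv.trans_le (hfg t htab)
  calc ‖x + ∫ s in a..b, f s‖ ^ 2 - ‖x‖ ^ 2 = ∫ t in a..b, deriv V t := by
        rw [hV_ac.integral_deriv_eq_sub]; simp [hV]
    _ ≤ ∫ t in a..b, g t :=
        intervalIntegral.integral_mono_ae_restrict hab hV_ac.intervalIntegrable_deriv hg
          ((ae_restrict_iff' measurableSet_Icc).2 hV_deriv)

end EnergyInequality

section Caratheodory

open Set

variable {E : Type*} [NormedAddCommGroup E]

/-- `Φ` is a Carathéodory solution of `ẋ = A(t)x` on `[0, ∞)`, expressed by the integrated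
equation. Only the values of `Φ` on `[0, ∞)` matter, but `Φ` is continuous on all of `ℝ`. -/
structure IsCaratheodorySolution [NormedSpace ℝ E] (A : ℝ → E →L[ℝ] E) (Φ : ℝ → E) : Prop where
  continuous : Continuous Φ
  eq_add_integral : ∀ t, 0 ≤ t → Φ t = Φ 0 + ∫ s in (0 : ℝ)..t, A s (Φ s)

theorem intervalIntegrable_clm_apply [NormedSpace ℝ E] {F : Type*} [NormedAddCommGroup F]
    [NormedSpace ℝ F] {A : ℝ → E →L[ℝ] F} {β : ℝ} (hA : StronglyMeasurable A)
    (hAβ : ∀ s, ‖A s‖ ≤ β) {ψ : ℝ → E} (hψ : Continuous ψ) (a b : ℝ) :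
    IntervalIntegrable (fun s => A s (ψ s)) volume a b := by
  refine ((hψ.norm.const_mul β).intervalIntegrable a b).mono_fun' ?_ (.of_forall fun s => ?_)
  · exact (ContinuousLinearMap.id ℝ (E →L[ℝ] F)).aestronglyMeasurable_comp₂
      hA.aestronglyMeasurable hψ.aestronglyMeasurable
  · exact (A s).le_of_opNorm_le (hAβ s) (ψ s)

namespace IsCaratheodorySolution

section NormedSpace

variable [NormedSpace ℝ E] {A : ℝ → E →L[ℝ] E} {Φ : ℝ → E} {β : ℝ}

theorem eq_add_integral_of_nonneg (hΦ : IsCaratheodorySolution A Φ) (hA : StronglyMeasurable A)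
    (hAβ : ∀ s, ‖A s‖ ≤ β) {s t : ℝ} (hs : 0 ≤ s) (ht : 0 ≤ t) :
    Φ t = Φ s + ∫ r in s..t, A r (Φ r) := by
  have integrable := intervalIntegrable_clm_apply hA hAβ hΦ.continuous
  rw [hΦ.eq_add_integral t ht, hΦ.eq_add_integral s hs, add_assoc,
    intervalIntegral.integral_add_adjacent_intervals (integrable 0 s) (integrable s t)]

theorem norm_sub_le (hΦ : IsCaratheodorySolution A Φ) (hA : StronglyMeasurable A)
    (hAβ : ∀ s, ‖A s‖ ≤ β) {M : ℝ} (hM : ∀ t, 0 ≤ t → ‖Φ t‖ ≤ M) {s t : ℝ} (hs : 0 ≤ s)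
    (ht : 0 ≤ t) : ‖Φ t - Φ s‖ ≤ β * M * |t - s| := by
  rw [hΦ.eq_add_integral_of_nonneg hA hAβ hs ht, add_sub_cancel_left]
  refine intervalIntegral.norm_integral_le_of_norm_le_const fun r hr => ?_
  have hr0 : 0 ≤ r := (le_min hs ht).trans hr.1.le
  exact (A r).le_of_opNorm_le_of_le (hAβ r) (hM r hr0)

theorem uniformContinuousOn (hΦ : IsCaratheodorySolution A Φ) (hA : StronglyMeasurable A)
    (hAβ : ∀ s, ‖A s‖ ≤ β) {M : ℝ} (hM : ∀ t, 0 ≤ t → ‖Φ t‖ ≤ M) :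
    UniformContinuousOn Φ (Ici 0) :=
  (LipschitzOnWith.of_dist_le_mul (K := (β * M).toNNReal) fun s hs t ht => by
    rw [dist_eq_norm, Real.dist_eq]
    exact (hΦ.norm_sub_le hA hAβ hM ht hs).trans <|
      mul_le_mul_of_nonneg_right (Real.le_coe_toNNReal _) (abs_nonneg _)).uniformContinuousOn

end NormedSpace

open scoped RealInnerProductSpace

variable [InnerProductSpace ℝ E] [CompleteSpace E] {A : ℝ → E →L[ℝ] E} {Φ : ℝ → E} {β : ℝ}

theorem norm_sq_sub_norm_sq_le (hΦ : IsCaratheodorySolution A Φ) (hA : StronglyMeasurable A)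
    (hAβ : ∀ s, ‖A s‖ ≤ β) {g : ℝ → ℝ} {a b : ℝ} (ha : 0 ≤ a) (hab : a ≤ b)
    (hg : IntervalIntegrable g volume a b)
    (hle : ∀ t ∈ Icc a b, 2 * ⟪Φ t, A t (Φ t)⟫ ≤ g t) :
    ‖Φ b‖ ^ 2 - ‖Φ a‖ ^ 2 ≤ ∫ t in a..b, g t := by
  have eq_from_a {t : ℝ} (ht : a ≤ t) := hΦ.eq_add_integral_of_nonneg hA hAβ ha (ha.trans ht)
  rw [eq_from_a hab]
  refine norm_add_integral_sq_sub_norm_sq_le hab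
    (intervalIntegrable_clm_apply hA hAβ hΦ.continuous a b) hg (Φ a) fun t ht => ?_
  rw [← eq_from_a ht.1]
  exact hle t ht

theorem antitoneOn_norm (hΦ : IsCaratheodorySolution A Φ) (hA : StronglyMeasurable A)
    (hAβ : ∀ s, ‖A s‖ ≤ β) (hdiss : ∀ s v, ⟪v, A s v⟫ ≤ 0) :
    AntitoneOn (fun t => ‖Φ t‖) (Ici 0) := by
  intro a ha b _ hab
  have h := hΦ.norm_sq_sub_norm_sq_le hA hAβ (g := fun _ => 0) ha hab (by simp)
    fun t _ => by linarith [hdiss t (Φ t)]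
  rw [intervalIntegral.integral_zero, sub_nonpos] at h
  exact (sq_le_sq₀ (norm_nonneg _) (norm_nonneg _)).1 h

end IsCaratheodorySolution

end Caratheodory

section Stability

open Filter Set Topology

open scoped RealInnerProductSpace

/-- A variant of Barbalat's lemma. -/
theorem tendsto_zero_of_uniformContinuousOn_of_integral_norm_pow {E : Type*}
    [NormedAddCommGroup E] {f : ℝ → E} {p : ℕ}
    (hf : UniformContinuousOn f (Ici 0))
    (hint : ∀ δ > 0, Tendsto (fun t => ∫ s in t..t + δ, ‖f s‖ ^ p) atTop (𝓝 0)) :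
    Tendsto f atTop (𝓝 0) := by
  refine Metric.tendsto_nhds.2 fun ε hε => ?_
  obtain ⟨η, hη, hfη⟩ := Metric.uniformContinuousOn_iff.1 hf (ε / 2) (half_pos hε)
  have hδ : 0 < η / 2 := half_pos hη
  filter_upwards [eventually_ge_atTop 0,
    (hint (η / 2) hδ).eventually_lt_const (u := η / 2 * (ε / 2) ^ p) (by positivity)]
    with t ht hlt
  rw [dist_zero_right]
  by_contra! hεt
  have hle : t ≤ t + η / 2 := by linarith
  have hsub : uIcc t (t + η / 2) ⊆ Ici 0 := by
    rw [uIcc_of_le hle]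
    exact fun s hs => ht.trans hs.1
  have half_le : ∀ s ∈ Icc t (t + η / 2), ε / 2 ≤ ‖f s‖ := fun s hs => by
    have hdist : dist t s < η := by
      rw [dist_comm, Real.dist_eq, abs_of_nonneg (by linarith [hs.1])]; linarith [hs.2]
    have h := hfη t ht s (ht.trans hs.1) hdist
    rw [dist_eq_norm] at h
    linarith [norm_sub_norm_le (f t) (f s)]
  refine hlt.not_ge ?_
  calc η / 2 * (ε / 2) ^ p = ∫ _ in t..t + η / 2, (ε / 2) ^ p := by
        rw [intervalIntegral.integral_const, add_sub_cancel_left, smul_eq_mul]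
    _ ≤ ∫ s in t..t + η / 2, ‖f s‖ ^ p :=
        intervalIntegral.integral_mono_on hle (by simp)
          ((hf.continuousOn.mono hsub).norm.pow p).intervalIntegrable
          fun s hs => pow_le_pow_left₀ (half_pos hε).le (half_le s hs) p

theorem exists_pos_forall_mul_norm_pow_le {X E : Type*} [TopologicalSpace X]
    [NormedAddCommGroup E] [NormedSpace ℝ E] [ProperSpace E] {K : Set X} (hK : IsCompact K)
    {f : X → E → ℝ} {p : ℕ} (hp : p ≠ 0) (hf : Continuous (Function.uncurry f))
    (hhom : ∀ x ∈ K, ∀ r : ℝ, 0 ≤ r → ∀ v, f x (r • v) = r ^ p * f x v)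
    (hpos : ∀ x ∈ K, ∀ v ≠ 0, 0 < f x v) :
    ∃ m > 0, ∀ x ∈ K, ∀ v, m * ‖v‖ ^ p ≤ f x v := by
  obtain ⟨m, hm, hmf⟩ : ∃ m > 0, ∀ z ∈ K ×ˢ Metric.sphere (0 : E) 1, m ≤ f z.1 z.2 :=
    (hK.prod (isCompact_sphere 0 1)).exists_forall_le' hf.continuousOn fun z hz =>
      hpos z.1 hz.1 z.2 (ne_zero_of_mem_unit_sphere ⟨z.2, hz.2⟩)
  refine ⟨m, hm, fun x hx v => ?_⟩
  rcases eq_or_ne v 0 with rfl | hv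
  · have h := hhom x hx 0 le_rfl 0
    simp_all
  · have hsphere : ‖v‖⁻¹ • v ∈ Metric.sphere (0 : E) 1 := by
      simpa using norm_smul_inv_norm (𝕜 := ℝ) hv
    calc m * ‖v‖ ^ p ≤ f x (‖v‖⁻¹ • v) * ‖v‖ ^ p := by
          gcongr; exact hmf (x, _) ⟨hx, hsphere⟩
      _ = f x v := by
          rw [mul_comm, ← hhom x hx ‖v‖ (norm_nonneg v), smul_inv_smul₀ (norm_ne_zero_iff.2 hv)]

namespace IsCaratheodorySolution

variable {E : Type*} [NormedAddCommGroup E]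

section Average

variable [NormedSpace ℝ E] {A : ℝ → E →L[ℝ] E} {Φ : ℝ → E} {β : ℝ} {P : E →L[ℝ] E}

/-- `P (Φ s - Φ t)` is small because `P Φ` is, the rest of `Φ s - Φ t` because its derivative is
controlled by `P Φ`. -/
theorem norm_sub_le_of_norm_apply_le (hΦ : IsCaratheodorySolution A Φ)
    (hA : StronglyMeasurable A) (hAβ : ∀ s, ‖A s‖ ≤ β) [CompleteSpace E] {C : ℝ} (hC : 0 ≤ C)
    (hP : ∀ s v, ‖A s v - P (A s v)‖ ≤ C * ‖P v‖) {s t η : ℝ} (ht : 0 ≤ t) (hts : t ≤ s)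
    (hη : ∀ r ∈ Icc t s, ‖P (Φ r)‖ ≤ η) :
    ‖Φ s - Φ t‖ ≤ (2 + C * (s - t)) * η := by
  have hAΦ := intervalIntegrable_clm_apply hA hAβ hΦ.continuous t s
  have range_part : ‖P (Φ s - Φ t)‖ ≤ 2 * η := by
    rw [map_sub]
    linarith [_root_.norm_sub_le (P (Φ s)) (P (Φ t)), hη s ⟨hts, le_rfl⟩, hη t ⟨le_rfl, hts⟩]
  have complement_part : ‖(Φ s - Φ t) - P (Φ s - Φ t)‖ ≤ C * η * (s - t) := by
    have integrated := hΦ.eq_add_integral_of_nonneg hA hAβ ht (ht.trans hts)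
    rw [integrated, add_sub_cancel_left, ← P.intervalIntegral_comp_comm hAΦ,
      ← intervalIntegral.integral_sub hAΦ ⟨P.integrable_comp hAΦ.1, P.integrable_comp hAΦ.2⟩,
      ← abs_of_nonneg (sub_nonneg.2 hts)]
    refine intervalIntegral.norm_integral_le_of_norm_le_const fun r hr => (hP r _).trans ?_
    rw [uIoc_of_le hts] at hr
    gcongr
    exact hη r ⟨hr.1.le, hr.2⟩
  calc ‖Φ s - Φ t‖ ≤ ‖P (Φ s - Φ t)‖ + ‖(Φ s - Φ t) - P (Φ s - Φ t)‖ :=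
        norm_le_norm_add_norm_sub' _ _
    _ ≤ (2 + C * (s - t)) * η := by linarith

theorem eventually_forall_norm_sub_le (hΦ : IsCaratheodorySolution A Φ)
    (hA : StronglyMeasurable A) (hAβ : ∀ s, ‖A s‖ ≤ β) [CompleteSpace E] {C : ℝ} (hC : 0 ≤ C)
    (hP : ∀ s v, ‖A s v - P (A s v)‖ ≤ C * ‖P v‖)
    (hPΦ : Tendsto (fun t => P (Φ t)) atTop (𝓝 0)) {η : ℝ} (hη : 0 < η) :
    ∀ᶠ t in atTop, ∀ s ∈ Icc t (t + 1), ‖Φ s - Φ t‖ ≤ η := by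
  have hsmall : ∀ᶠ t in atTop, ‖P (Φ t)‖ ≤ η / (2 + C) :=
    (tendsto_zero_iff_norm_tendsto_zero.1 hPΦ).eventually_le_const (by positivity)
  obtain ⟨T, hT⟩ := eventually_atTop.1 hsmall
  filter_upwards [eventually_ge_atTop T, eventually_ge_atTop 0] with t hTt ht s hs
  calc ‖Φ s - Φ t‖ ≤ (2 + C * (s - t)) * (η / (2 + C)) :=
        hΦ.norm_sub_le_of_norm_apply_le hA hAβ hC hP ht hs.1 fun r hr => hT r (hTt.trans hr.1)
    _ ≤ (2 + C) * (η / (2 + C)) := by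
        gcongr
        exact mul_le_of_le_one_right hC (by linarith [hs.2])
    _ = η := mul_div_cancel₀ _ (by positivity)

theorem norm_integral_apply_le (hΦ : IsCaratheodorySolution A Φ)
    (hA : StronglyMeasurable A) (hAβ : ∀ s, ‖A s‖ ≤ β) [CompleteSpace E] {t η : ℝ} (ht : 0 ≤ t)
    (hη : ∀ s ∈ Icc t (t + 1), ‖Φ s - Φ t‖ ≤ η) :
    ‖(∫ s in t..t + 1, A s) (Φ t)‖ ≤ (1 + β) * η := by
  have integrated := hΦ.eq_add_integral_of_nonneg hA hAβ ht (ht.trans (lt_add_one t).le)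
  have hA_int : IntervalIntegrable A volume t (t + 1) :=
    (intervalIntegrable_const (c := β)).mono_fun' hA.aestronglyMeasurable (.of_forall hAβ)
  have hAΦ := intervalIntegrable_clm_apply hA hAβ hΦ.continuous t (t + 1)
  have hAt := intervalIntegrable_clm_apply hA hAβ (continuous_const (y := Φ t)) t (t + 1)
  have split : (∫ s in t..t + 1, A s) (Φ t) =
      (Φ (t + 1) - Φ t) - ∫ s in t..t + 1, A s (Φ s - Φ t) := by
    simp only [map_sub]
    rw [intervalIntegral.integral_sub hAΦ hAt, integrated, add_sub_cancel_left, sub_sub_cancel,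
      ContinuousLinearMap.intervalIntegral_apply hA_int]
  have remainder : ‖∫ s in t..t + 1, A s (Φ s - Φ t)‖ ≤ β * η := by
    have h := intervalIntegral.norm_integral_le_of_norm_le_const (a := t) (b := t + 1)
      (f := fun s => A s (Φ s - Φ t)) (C := β * η) fun s hs => by
        rw [uIoc_of_le (lt_add_one t).le] at hs
        exact (A s).le_of_opNorm_le_of_le (hAβ s) (hη s ⟨hs.1.le, hs.2⟩)
    simpa using h
  rw [split]
  linarith [_root_.norm_sub_le (Φ (t + 1) - Φ t) (∫ s in t..t + 1, A s (Φ s - Φ t)),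
    hη (t + 1) ⟨(lt_add_one t).le, le_rfl⟩]

end Average

variable [InnerProductSpace ℝ E] {A : ℝ → E →L[ℝ] E} {Φ : ℝ → E} {β : ℝ} {P : E →L[ℝ] E}

theorem tendsto_integral_norm_apply_sq_zero [CompleteSpace E] (hΦ : IsCaratheodorySolution A Φ)
    (hA : StronglyMeasurable A) (hAβ : ∀ s, ‖A s‖ ≤ β) {c : ℝ} (hc : 0 < c)
    (hdiss : ∀ s v, ⟪v, A s v⟫ ≤ -(c * ‖P v‖ ^ 2)) {δ : ℝ} (hδ : 0 < δ) :
    Tendsto (fun t => ∫ s in t..t + δ, ‖P (Φ s)‖ ^ 2) atTop (𝓝 0) := by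
  have hanti : Antitone fun t => ‖Φ (max t 0)‖ := fun s t hst =>
    hΦ.antitoneOn_norm hA hAβ (fun s v => (hdiss s v).trans (neg_nonpos.2 (by positivity)))
      (le_max_right s 0) (le_max_right t 0) (max_le_max_right 0 hst)
  have hlim := (tendsto_atTop_ciInf hanti
    ⟨0, forall_mem_range.2 fun _ => norm_nonneg _⟩).pow 2
  have hdecay : Tendsto (fun t => (2 * c)⁻¹ *
      (‖Φ (max t 0)‖ ^ 2 - ‖Φ (max (t + δ) 0)‖ ^ 2)) atTop (𝓝 0) := by
    simpa using
      (hlim.sub (hlim.comp (tendsto_atTop_add_const_right _ δ tendsto_id))).const_mul (2 * c)⁻¹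
  refine tendsto_of_tendsto_of_tendsto_of_le_of_le' tendsto_const_nhds hdecay ?_ ?_
  · exact .of_forall fun t =>
      intervalIntegral.integral_nonneg (by linarith) fun s _ => by positivity
  · filter_upwards [eventually_ge_atTop 0] with t ht
    have hcont : Continuous fun s => ‖P (Φ s)‖ ^ 2 := (P.continuous.comp hΦ.continuous).norm.pow 2
    have henergy := hΦ.norm_sq_sub_norm_sq_le hA hAβ (g := fun s => -(2 * c) * ‖P (Φ s)‖ ^ 2)
      ht (le_add_of_nonneg_right hδ.le) ((hcont.const_mul _).intervalIntegrable _ _)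
      fun s _ => by linarith [hdiss s (Φ s)]
    rw [intervalIntegral.integral_const_mul] at henergy
    rw [max_eq_left ht, max_eq_left (by linarith), le_inv_mul_iff₀ (by positivity)]
    linarith

theorem tendsto_apply_zero [CompleteSpace E] (hΦ : IsCaratheodorySolution A Φ)
    (hA : StronglyMeasurable A) (hAβ : ∀ s, ‖A s‖ ≤ β) {c : ℝ} (hc : 0 < c)
    (hdiss : ∀ s v, ⟪v, A s v⟫ ≤ -(c * ‖P v‖ ^ 2)) :
    Tendsto (fun t => P (Φ t)) atTop (𝓝 0) := by
  have hnorm := hΦ.antitoneOn_norm hA hAβ fun s v =>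
    (hdiss s v).trans (neg_nonpos.2 (by positivity))
  have huc : UniformContinuousOn Φ (Ici 0) :=
    hΦ.uniformContinuousOn hA hAβ fun t ht => hnorm self_mem_Ici ht ht
  exact tendsto_zero_of_uniformContinuousOn_of_integral_norm_pow
    (P.uniformContinuous.comp_uniformContinuousOn huc)
    fun δ hδ => hΦ.tendsto_integral_norm_apply_sq_zero hA hAβ hc hdiss hδ

/-- Averaging `A` over `[t, t + 1]` produces an element of `𝒜`, which is bounded below, while
`Φ` is nearly constant on `[t, t + 1]` for `t` large. -/
theorem tendsto_zero [FiniteDimensional ℝ E] (hΦ : IsCaratheodorySolution A Φ)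
    (hA : StronglyMeasurable A) {𝒜 : Set (E →L[ℝ] E)} (hcompact : IsCompact 𝒜)
    (hconvex : Convex ℝ 𝒜) (hA𝒜 : ∀ s, A s ∈ 𝒜) (hinj : ∀ L ∈ 𝒜, ∀ v, L v = 0 → v = 0)
    {c C : ℝ} (hc : 0 < c) (hC : 0 ≤ C) (hdiss : ∀ s v, ⟪v, A s v⟫ ≤ -(c * ‖P v‖ ^ 2))
    (hP : ∀ s v, ‖A s v - P (A s v)‖ ≤ C * ‖P v‖) :
    Tendsto Φ atTop (𝓝 0) := by
  obtain ⟨β, hβ⟩ := hcompact.isBounded.exists_norm_le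
  have hAβ : ∀ s, ‖A s‖ ≤ β := fun s => hβ _ (hA𝒜 s)
  have hβ0 : 0 ≤ β := (norm_nonneg _).trans (hAβ 0)
  obtain ⟨m, hm, hm_le⟩ : ∃ m > 0, ∀ L ∈ 𝒜, ∀ v, m * ‖v‖ ^ 1 ≤ ‖L v‖ :=
    exists_pos_forall_mul_norm_pow_le hcompact one_ne_zero
      (f := fun (L : E →L[ℝ] E) v => ‖L v‖) (by fun_prop)
      (fun L _ r hr v => by rw [map_smul, norm_smul, Real.norm_of_nonneg hr, pow_one])
      fun L hL v hv => norm_pos_iff.2 (mt (hinj L hL v) hv)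
  have mean_mem : ∀ t, ∫ s in t..t + 1, A s ∈ 𝒜 := fun t => by
    have : IsProbabilityMeasure (volume.restrict (Ioc t (t + 1))) := ⟨by simp⟩
    rw [intervalIntegral.integral_of_le (lt_add_one t).le]
    exact hconvex.integral_mem hcompact.isClosed (.of_forall hA𝒜)
      (.of_bound hA.aestronglyMeasurable β (.of_forall hAβ))
  refine Metric.tendsto_nhds.2 fun ε hε => ?_
  filter_upwards [eventually_ge_atTop 0, hΦ.eventually_forall_norm_sub_le hA hAβ hC hP
    (hΦ.tendsto_apply_zero hA hAβ hc hdiss) (η := m * (ε / 2) / (1 + β)) (by positivity)]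
    with t ht hclose
  have hle : m * ‖Φ t‖ ≤ m * (ε / 2) := calc
    m * ‖Φ t‖ ≤ ‖(∫ s in t..t + 1, A s) (Φ t)‖ := by
        simpa only [pow_one] using hm_le _ (mean_mem t) (Φ t)
    _ ≤ (1 + β) * (m * (ε / 2) / (1 + β)) := hΦ.norm_integral_apply_le hA hAβ ht hclose
    _ = m * (ε / 2) := mul_div_cancel₀ _ (by positivity)
  rw [dist_zero_right]
  linarith [le_of_mul_le_mul_left hle hm]

end IsCaratheodorySolution

end Stability

section Existence

open scoped BoundedContinuousFunction

variable {E : Type*} [NormedAddCommGroup E] [NormedSpace ℝ E]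

theorem norm_integral_le_of_norm_le_exp {f : ℝ → E} {M γ : ℝ} (hγ : 0 < γ)
    (hf : ∀ s, 0 ≤ s → ‖f s‖ ≤ M * Real.exp (γ * s)) {t : ℝ} (ht : 0 ≤ t) :
    ‖∫ s in (0 : ℝ)..t, f s‖ ≤ M / γ * Real.exp (γ * t) := by
  have hM : 0 ≤ M := by simpa using (norm_nonneg _).trans (hf 0 le_rfl)
  have hexp : Continuous fun s => M * Real.exp (γ * s) := by fun_prop
  calc ‖∫ s in (0 : ℝ)..t, f s‖ ≤ ∫ s in (0 : ℝ)..t, M * Real.exp (γ * s) :=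
        intervalIntegral.norm_integral_le_of_norm_le ht (.of_forall fun s hs => hf s hs.1.le)
          (hexp.intervalIntegrable _ _)
    _ = M / γ * (Real.exp (γ * t) - 1) := by
        rw [intervalIntegral.integral_const_mul, intervalIntegral.integral_comp_mul_left
          (fun s => Real.exp s) hγ.ne', integral_exp, mul_zero, Real.exp_zero, smul_eq_mul]
        ring
    _ ≤ M / γ * Real.exp (γ * t) := by gcongr; linarith

variable {A : ℝ → E →L[ℝ] E} {β : ℝ}

theorem norm_integral_exp_smul_apply_le (hAβ : ∀ s, ‖A s‖ ≤ β) {γ : ℝ} (hγ : 0 < γ)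
    (ψ : ℝ →ᵇ E) (t : ℝ) :
    ‖∫ s in (0 : ℝ)..|t|, A s (Real.exp (γ * |s|) • ψ s)‖ ≤
      β * ‖ψ‖ / γ * Real.exp (γ * |t|) := by
  refine norm_integral_le_of_norm_le_exp hγ (fun s hs => ?_) (abs_nonneg t)
  calc ‖A s (Real.exp (γ * |s|) • ψ s)‖ ≤ β * (‖Real.exp (γ * |s|)‖ * ‖ψ‖) :=
        (A s).le_of_opNorm_le_of_le (hAβ s) <| (norm_smul_le _ _).trans <| by
          gcongr; exact ψ.norm_coe_le_norm s
    _ = β * ‖ψ‖ * Real.exp (γ * s) := by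
        rw [Real.norm_of_nonneg (Real.exp_pos _).le, abs_of_nonneg hs]; ring

/-- The Picard operator in the variable `ψ t = exp (-γ|t|) Φ t`, in which it is a contraction. -/
theorem exists_weightedPicard (hA : StronglyMeasurable A) (hAβ : ∀ s, ‖A s‖ ≤ β) {γ : ℝ}
    (hγ : 0 < γ) (X : E) :
    ∃ T : (ℝ →ᵇ E) → (ℝ →ᵇ E), ∀ ψ t, T ψ t = Real.exp (-(γ * |t|)) •
      (X + ∫ s in (0 : ℝ)..|t|, A s (Real.exp (γ * |s|) • ψ s)) := by
  suffices h : ∀ ψ : ℝ →ᵇ E, ∃ φ : ℝ →ᵇ E, ∀ t, φ t = Real.exp (-(γ * |t|)) •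
      (X + ∫ s in (0 : ℝ)..|t|, A s (Real.exp (γ * |s|) • ψ s)) by
    choose T hT using h
    exact ⟨T, hT⟩
  intro ψ
  have hcont : Continuous fun t => Real.exp (-(γ * |t|)) •
      (X + ∫ s in (0 : ℝ)..|t|, A s (Real.exp (γ * |s|) • ψ s)) := by
    have hint := intervalIntegral.continuous_primitive (μ := volume)
      (intervalIntegrable_clm_apply hA hAβ
        (by fun_prop : Continuous fun s => Real.exp (γ * |s|) • ψ s)) 0
    have := hint.comp continuous_abs
    fun_prop
  refine ⟨.ofNormedAddCommGroup _ hcont (‖X‖ + β * ‖ψ‖ / γ) fun t => ?_, fun t => rfl⟩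
  rw [norm_smul, Real.norm_of_nonneg (Real.exp_pos _).le, Real.exp_neg,
    inv_mul_le_iff₀ (Real.exp_pos _)]
  have hone : 1 ≤ Real.exp (γ * |t|) := Real.one_le_exp (by positivity)
  calc _ ≤ ‖X‖ + β * ‖ψ‖ / γ * Real.exp (γ * |t|) :=
        norm_add_le_of_le le_rfl (norm_integral_exp_smul_apply_le hAβ hγ ψ t)
    _ ≤ Real.exp (γ * |t|) * (‖X‖ + β * ‖ψ‖ / γ) := by
        nlinarith [mul_le_mul_of_nonneg_right hone (norm_nonneg X)]

theorem contractingWith_of_weightedPicard (hA : StronglyMeasurable A) (hAβ : ∀ s, ‖A s‖ ≤ β)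
    {γ : ℝ} (hβγ : β < γ) {X : E} {T : (ℝ →ᵇ E) → (ℝ →ᵇ E)}
    (hT : ∀ ψ t, T ψ t = Real.exp (-(γ * |t|)) •
      (X + ∫ s in (0 : ℝ)..|t|, A s (Real.exp (γ * |s|) • ψ s))) :
    ContractingWith (β / γ).toNNReal T := by
  have hβ : 0 ≤ β := (norm_nonneg _).trans (hAβ 0)
  have hγ : 0 < γ := hβ.trans_lt hβγ
  refine ⟨Real.toNNReal_lt_one.2 ((div_lt_one hγ).2 hβγ),
    LipschitzWith.of_dist_le_mul fun ψ φ => ?_⟩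
  rw [Real.coe_toNNReal _ (by positivity)]
  refine (BoundedContinuousFunction.dist_le (by positivity)).2 fun t => ?_
  have integrable (χ : ℝ →ᵇ E) := intervalIntegrable_clm_apply hA hAβ
    (by fun_prop : Continuous fun s => Real.exp (γ * |s|) • χ s) 0 |t|
  have hdiff : T ψ t - T φ t = Real.exp (-(γ * |t|)) •
      ∫ s in (0 : ℝ)..|t|, A s (Real.exp (γ * |s|) • (ψ - φ) s) := by
    simp only [hT, BoundedContinuousFunction.coe_sub, Pi.sub_apply, smul_sub, map_sub]
    rw [intervalIntegral.integral_sub (integrable ψ) (integrable φ)]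
    module
  rw [dist_eq_norm, dist_eq_norm, hdiff, norm_smul, Real.norm_of_nonneg (Real.exp_pos _).le,
    Real.exp_neg, inv_mul_le_iff₀ (Real.exp_pos _)]
  refine (norm_integral_exp_smul_apply_le hAβ hγ (ψ - φ) t).trans_eq ?_
  ring

theorem exists_isCaratheodorySolution [CompleteSpace E] (hA : StronglyMeasurable A)
    (hAβ : ∀ s, ‖A s‖ ≤ β) (X : E) : ∃ Φ, IsCaratheodorySolution A Φ ∧ Φ 0 = X := by
  obtain ⟨γ, hβγ⟩ := exists_gt β
  have hγ : 0 < γ := ((norm_nonneg _).trans (hAβ 0)).trans_lt hβγ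
  obtain ⟨T, hT⟩ := exists_weightedPicard hA hAβ hγ X
  obtain ⟨ψ, hψ⟩ : ∃ ψ, T ψ = ψ :=
    ⟨_, (contractingWith_of_weightedPicard hA hAβ hβγ hT).fixedPoint_isFixedPt⟩
  set Φ : ℝ → E := fun t => Real.exp (γ * |t|) • ψ t
  have hΦ_eq (t : ℝ) : Φ t = X + ∫ s in (0 : ℝ)..|t|, A s (Φ s) := calc
    Φ t = Real.exp (γ * |t|) • T ψ t := by rw [hψ]
    _ = X + ∫ s in (0 : ℝ)..|t|, A s (Φ s) := by
      rw [hT, smul_smul, ← Real.exp_add, add_neg_cancel, Real.exp_zero, one_smul]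
  have hΦ0 : Φ 0 = X := by simpa using hΦ_eq 0
  refine ⟨Φ, ⟨by fun_prop, fun t ht => ?_⟩, hΦ0⟩
  rw [hΦ_eq t, hΦ0, abs_of_nonneg ht]

end Existence

section FastOscillation

open Set

variable {E : Type*} [NormedAddCommGroup E] {p : ℝ → E} {C : ℝ}

theorem intervalIntegrable_comp_of_norm_le {α : Type*} [MeasurableSpace α] {f : α → E}
    (hf : StronglyMeasurable f) (hfC : ∀ x, ‖f x‖ ≤ C) {θ : ℝ → α} (hθ : Measurable θ) (a b : ℝ) :
    IntervalIntegrable (fun s => f (θ s)) volume a b :=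
  (intervalIntegrable_const (c := C)).mono_fun' (hf.comp_measurable hθ).aestronglyMeasurable
    (.of_forall fun s => hfC (θ s))

variable [NormedSpace ℝ E]

theorem integral_eq_zero_of_periodic (hper : Function.Periodic p 1)
    (hp : ∀ a b, IntervalIntegrable p volume a b) (hmean : ∫ x in (0 : ℝ)..1, p x = 0)
    (m n : ℤ) : ∫ x in (m : ℝ)..n, p x = 0 := by
  have h := hper.intervalIntegral_add_zsmul_eq (n - m) m hp
  rwa [hper.intervalIntegral_add_eq m 0, zero_add, hmean, smul_zero, zsmul_one, Int.cast_sub,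
    add_sub_cancel] at h

theorem norm_integral_le_of_periodic (hper : Function.Periodic p 1)
    (hp : ∀ a b, IntervalIntegrable p volume a b) (hpC : ∀ x, ‖p x‖ ≤ C)
    (hmean : ∫ x in (0 : ℝ)..1, p x = 0) (m : ℤ) (t : ℝ) : ‖∫ x in (m : ℝ)..t, p x‖ ≤ C := by
  have hC : 0 ≤ C := (norm_nonneg _).trans (hpC 0)
  rw [← intervalIntegral.integral_add_adjacent_intervals (hp m ⌊t⌋) (hp ⌊t⌋ t),
    integral_eq_zero_of_periodic hper hp hmean, zero_add]
  calc ‖∫ x in (⌊t⌋ : ℝ)..t, p x‖ ≤ C * |t - ⌊t⌋| :=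
        intervalIntegral.norm_integral_le_of_norm_le_const fun x _ => hpC x
    _ ≤ C := mul_le_of_le_one_right hC (by
        rw [Int.self_sub_floor, Int.abs_fract]; exact (Int.fract_lt_one t).le)

/-- A phase running at speed `ν n` on `[n, n + 1)`: each such interval carries `ν n` full periods,
so the integral up to time `n` vanishes and the error made afterwards is at most `C / ν n`. -/
theorem norm_integral_comp_phase_le (hper : Function.Periodic p 1) (hp : StronglyMeasurable p)
    (hpC : ∀ x, ‖p x‖ ≤ C) (hmean : ∫ x in (0 : ℝ)..1, p x = 0) {ν : ℕ → ℕ} (hν : ∀ n, ν n ≠ 0)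
    {t : ℝ} (ht : 0 ≤ t) :
    ‖∫ s in (0 : ℝ)..t, p (ν ⌊s⌋₊ * s)‖ ≤ C / ν ⌊t⌋₊ := by
  have hp_int := intervalIntegrable_comp_of_norm_le hp hpC measurable_id
  have hphase_int := intervalIntegrable_comp_of_norm_le hp hpC
    (by fun_prop : Measurable fun s : ℝ => (ν ⌊s⌋₊ : ℝ) * s)
  have on_interval (n : ℕ) {t : ℝ} (hnt : (n : ℝ) ≤ t) (htn : t ≤ n + 1) :
      ∫ s in (n : ℝ)..t, p (ν ⌊s⌋₊ * s) =
        (ν n : ℝ)⁻¹ • ∫ x in ((ν n * n : ℤ) : ℝ)..ν n * t, p x := by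
    push_cast
    rw [← intervalIntegral.integral_comp_mul_left p (Nat.cast_ne_zero.2 (hν n))]
    refine intervalIntegral.integral_congr_Ioo_of_le hnt fun s hs => ?_
    have hfloor : ⌊s⌋₊ = n := Nat.floor_eq_on_Ico n s ⟨hs.1.le, hs.2.trans_le htn⟩
    simp only [hfloor]
  have full_interval (n : ℕ) : ∫ s in (n : ℝ)..(n + 1 : ℕ), p (ν ⌊s⌋₊ * s) = 0 := by
    rw [on_interval n (by simp) (by simp)]
    have h := integral_eq_zero_of_periodic hper hp_int hmean (ν n * n) (ν n * (n + 1))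
    push_cast at h ⊢
    rw [h, smul_zero]
  have upto_floor : ∫ s in (0 : ℝ)..⌊t⌋₊, p (ν ⌊s⌋₊ * s) = 0 := by
    have h := intervalIntegral.sum_integral_adjacent_intervals (a := fun n : ℕ => (n : ℝ))
      (n := ⌊t⌋₊) fun n _ => hphase_int n (n + 1 : ℕ)
    rw [← Nat.cast_zero, ← h]
    exact Finset.sum_eq_zero fun n _ => full_interval n
  rw [← intervalIntegral.integral_add_adjacent_intervals (hphase_int 0 ⌊t⌋₊) (hphase_int _ t),
    upto_floor, zero_add, on_interval _ (Nat.floor_le ht) (Nat.lt_floor_add_one t).le, norm_smul,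
    norm_inv, Real.norm_natCast, inv_mul_eq_div]
  gcongr
  exact norm_integral_le_of_periodic hper hp_int hpC hmean _ _

theorem exists_measurable_phase_norm_integral_le (hper : Function.Periodic p 1)
    (hp : StronglyMeasurable p) (hpC : ∀ x, ‖p x‖ ≤ C) (hmean : ∫ x in (0 : ℝ)..1, p x = 0)
    {ψ : ℝ → ℝ} (hψ : Antitone ψ) (hψ0 : ∀ t, 0 < ψ t) :
    ∃ θ : ℝ → ℝ, Measurable θ ∧ ∀ t, 0 ≤ t → ‖∫ s in (0 : ℝ)..t, p (θ s)‖ ≤ ψ t := by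
  have hν (n : ℕ) : ∃ N : ℕ, N ≠ 0 ∧ C / ψ (n + 1) ≤ N := by
    obtain ⟨N, hN⟩ := exists_nat_ge (C / ψ (n + 1))
    exact ⟨N + 1, N.succ_ne_zero, hN.trans (by simp)⟩
  choose ν hν0 hνψ using hν
  refine ⟨fun s => ν ⌊s⌋₊ * s, by fun_prop, fun t ht => ?_⟩
  have hν_pos : (0 : ℝ) < ν ⌊t⌋₊ := Nat.cast_pos.2 (Nat.pos_of_ne_zero (hν0 _))
  calc ‖∫ s in (0 : ℝ)..t, p (ν ⌊s⌋₊ * s)‖ ≤ C / ν ⌊t⌋₊ :=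
        norm_integral_comp_phase_le hper hp hpC hmean hν0 ht
    _ ≤ ψ (⌊t⌋₊ + 1) := div_le_of_le_mul₀ hν_pos.le (hψ0 _).le
        ((div_le_iff₀' (hψ0 _)).1 (hνψ _))
    _ ≤ ψ t := hψ (Nat.lt_floor_add_one t).le

end FastOscillation

section Instability

open Filter Set Topology

open scoped RealInnerProductSpace

variable {E : Type*} [NormedAddCommGroup E] [InnerProductSpace ℝ E]

theorem inner_sub_add_apply_le {L : E →L[ℝ] E} (hL : ∀ v, ⟪v, L v⟫ ≤ 0) (x e w : E) :
    ⟪x - (e + w), L x - L e⟫ ≤ ‖x - (e + w)‖ * ‖L w‖ := by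
  have hsplit : L x - L e = L (x - (e + w)) + L w := by
    simp only [← map_sub, ← map_add]
    congr 1
    abel
  rw [hsplit, inner_add_right]
  linarith [hL (x - (e + w)), real_inner_le_norm (x - (e + w)) (L w)]

namespace IsCaratheodorySolution

variable {A : ℝ → E →L[ℝ] E} {Φ : ℝ → E} {β : ℝ}

/-- The difference `Ψ` of the two sides satisfies `Ψ' = AΨ + Aw`, where `w` is the integral of
`A(·)(Φ 0)`, so dissipativity bounds the derivative of `‖Ψ‖²` by `2‖Ψ‖‖Aw‖`. -/
theorem norm_sub_add_integral_sq_le [CompleteSpace E] (hΦ : IsCaratheodorySolution A Φ)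
    (hA : StronglyMeasurable A) (hAβ : ∀ s, ‖A s‖ ≤ β) (hdiss : ∀ s v, ⟪v, A s v⟫ ≤ 0) {δ : ℝ}
    (hδ : ∀ t, 0 ≤ t → ‖∫ s in (0 : ℝ)..t, A s (Φ 0)‖ ≤ δ * Real.exp (-t)) {t : ℝ} (ht : 0 ≤ t) :
    ‖Φ t - (Φ 0 + ∫ s in (0 : ℝ)..t, A s (Φ 0))‖ ^ 2 ≤ 2 * ((2 * ‖Φ 0‖ + δ) * (β * δ)) := by
  set e := Φ 0
  set w : ℝ → E := fun t => ∫ s in (0 : ℝ)..t, A s e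
  have hβ : 0 ≤ β := (norm_nonneg _).trans (hAβ 0)
  have hδ0 : 0 ≤ δ := by simpa [w] using hδ 0 le_rfl
  have hAΦ := intervalIntegrable_clm_apply hA hAβ hΦ.continuous 0
  have hAe := intervalIntegrable_clm_apply hA hAβ (continuous_const (y := e)) 0
  have difference {t : ℝ} (ht : 0 ≤ t) :
      Φ t - (e + w t) = 0 + ∫ s in (0 : ℝ)..t, (A s (Φ s) - A s e) := by
    rw [intervalIntegral.integral_sub (hAΦ t) (hAe t), hΦ.eq_add_integral t ht]
    abel
  have difference_norm {t : ℝ} (ht : 0 ≤ t) : ‖Φ t - (e + w t)‖ ≤ 2 * ‖e‖ + δ := by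
    have hΦ_le : ‖Φ t‖ ≤ ‖e‖ := hΦ.antitoneOn_norm hA hAβ hdiss self_mem_Ici ht ht
    have hw_le : ‖w t‖ ≤ δ := (hδ t ht).trans
      (mul_le_of_le_one_right hδ0 (Real.exp_le_one_iff.2 (by linarith)))
    linarith [_root_.norm_sub_le (Φ t) (e + w t), norm_add_le e (w t)]
  have energy_rate {t : ℝ} (ht : 0 ≤ t) : ⟪Φ t - (e + w t), A t (Φ t) - A t e⟫ ≤
      (2 * ‖e‖ + δ) * (β * (δ * Real.exp (-t))) :=
    (inner_sub_add_apply_le (hdiss t) _ e (w t)).trans <| mul_le_mul (difference_norm ht)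
      ((A t).le_of_opNorm_le_of_le (hAβ t) (hδ t ht)) (norm_nonneg _) (by positivity)
  have hexp : Continuous fun s => 2 * ((2 * ‖e‖ + δ) * (β * δ)) * Real.exp (-s) := by fun_prop
  have henergy := norm_add_integral_sq_sub_norm_sq_le ht ((hAΦ t).sub (hAe t))
    (hexp.intervalIntegrable 0 t) 0 fun s hs => by
      rw [← difference hs.1]; linarith [energy_rate hs.1]
  rw [← difference ht, norm_zero, intervalIntegral.integral_const_mul,
    intervalIntegral.integral_comp_neg (fun s => Real.exp s), integral_exp, neg_zero,
    Real.exp_zero] at henergy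
  have hfactor : 0 ≤ 2 * ((2 * ‖e‖ + δ) * (β * δ)) := by positivity
  linarith [mul_nonneg hfactor (Real.exp_pos (-t)).le]

theorem not_tendsto_zero [CompleteSpace E] (hΦ : IsCaratheodorySolution A Φ)
    (hA : StronglyMeasurable A) (hAβ : ∀ s, ‖A s‖ ≤ β) (hdiss : ∀ s v, ⟪v, A s v⟫ ≤ 0) {δ : ℝ}
    (hδ : ∀ t, 0 ≤ t → ‖∫ s in (0 : ℝ)..t, A s (Φ 0)‖ ≤ δ * Real.exp (-t))
    (hδ_small : 2 * ((2 * ‖Φ 0‖ + δ) * (β * δ)) < ‖Φ 0‖ ^ 2) : ¬ Tendsto Φ atTop (𝓝 0) := by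
  intro hlim
  have hw : Tendsto (fun t => ∫ s in (0 : ℝ)..t, A s (Φ 0)) atTop (𝓝 0) :=
    squeeze_zero_norm' ((eventually_ge_atTop 0).mono hδ) <| by
      simpa using Real.tendsto_exp_neg_atTop_nhds_zero.const_mul δ
  have hdiff : Tendsto (fun t => ‖Φ t - (Φ 0 + ∫ s in (0 : ℝ)..t, A s (Φ 0))‖ ^ 2) atTop
      (𝓝 (‖Φ 0‖ ^ 2)) := by
    simpa using ((hlim.sub (hw.const_add (Φ 0))).norm).pow 2
  exact hδ_small.not_ge <| le_of_tendsto hdiff <| (eventually_ge_atTop 0).mono fun t ht =>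
    hΦ.norm_sub_add_integral_sq_le hA hAβ hdiss hδ ht

end IsCaratheodorySolution

/-- The `1`-periodic switching law spending the fraction `l` of each period in mode `1`. -/
def dutyCycle (l x : ℝ) : Fin 2 := if Int.fract x < l then 1 else 0

theorem measurable_dutyCycle (l : ℝ) : Measurable (dutyCycle l) :=
  Measurable.ite (measurableSet_lt measurable_fract measurable_const)
    measurable_const measurable_const

theorem periodic_dutyCycle (l : ℝ) : Function.Periodic (dutyCycle l) 1 := fun x => by
  simp only [dutyCycle, Int.fract_add_one]

theorem integral_dutyCycle {F : Type*} [NormedAddCommGroup F] [NormedSpace ℝ F] [CompleteSpace F]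
    (f : Fin 2 → F) {l : ℝ} (hl : l ∈ Icc 0 1) :
    ∫ x in (0 : ℝ)..1, f (dutyCycle l x) = (1 - l) • f 0 + l • f 1 := by
  have hint : ∀ a b, IntervalIntegrable (fun x => f (dutyCycle l x)) volume a b :=
    intervalIntegrable_comp_of_norm_le (f := f) .of_discrete (fun i => norm_le_pi_norm f i)
      (measurable_dutyCycle l)
  have mode_one : ∫ x in (0 : ℝ)..l, f (dutyCycle l x) = ∫ _ in (0 : ℝ)..l, f 1 :=
    intervalIntegral.integral_congr_Ioo_of_le hl.1 fun x hx => by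
      have hfract : Int.fract x = x := Int.fract_eq_self.2 ⟨hx.1.le, hx.2.trans_le hl.2⟩
      simp only [dutyCycle, hfract, if_pos hx.2]
  have mode_zero : ∫ x in l..1, f (dutyCycle l x) = ∫ _ in l..1, f 0 :=
    intervalIntegral.integral_congr_Ioo_of_le hl.2 fun x hx => by
      have hfract : Int.fract x = x := Int.fract_eq_self.2 ⟨hl.1.trans hx.1.le, hx.2⟩
      simp only [dutyCycle, hfract, if_neg hx.1.not_gt]
  rw [← intervalIntegral.integral_add_adjacent_intervals (hint 0 l) (hint l 1), mode_one,
    mode_zero, intervalIntegral.integral_const, intervalIntegral.integral_const, sub_zero, add_comm]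

/-- At high switching frequency the system with duty cycle `l` follows the averaged one, of which
`e` is an equilibrium. -/
theorem exists_isCaratheodorySolution_not_tendsto_zero [CompleteSpace E] {B : Fin 2 → E →L[ℝ] E}
    (hB : ∀ i v, ⟪v, B i v⟫ ≤ 0) {l : ℝ} (hl : l ∈ Icc 0 1) {e : E} (he : e ≠ 0)
    (hequil : (1 - l) • B 0 e + l • B 1 e = 0) :
    ∃ u : ℝ → Fin 2, Measurable u ∧
      ∃ Φ, IsCaratheodorySolution (fun s => B (u s)) Φ ∧ ¬ Tendsto Φ atTop (𝓝 0) := by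
  obtain ⟨β, hβ⟩ := (finite_range B).isBounded.exists_norm_le
  replace hβ (i : Fin 2) : ‖B i‖ ≤ β := hβ _ ⟨i, rfl⟩
  obtain ⟨δ, hδ, hδ_small⟩ : ∃ δ > 0, 2 * ((2 * ‖e‖ + δ) * (β * δ)) < ‖e‖ ^ 2 := by
    have hlim : Tendsto (fun δ => 2 * ((2 * ‖e‖ + δ) * (β * δ))) (𝓝[>] 0) (𝓝 0) := by
      have hcont : Continuous fun δ => 2 * ((2 * ‖e‖ + δ) * (β * δ)) := by fun_prop
      simpa using (hcont.tendsto 0).mono_left nhdsWithin_le_nhds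
    exact ((eventually_mem_nhdsWithin (s := Ioi (0 : ℝ))).and
      (hlim.eventually_lt_const (by positivity))).exists
  obtain ⟨θ, hθ, hθδ⟩ := exists_measurable_phase_norm_integral_le
    (p := fun x => B (dutyCycle l x) e) (C := β * ‖e‖) (ψ := fun t => δ * Real.exp (-t))
    (fun x => by simp only [periodic_dutyCycle l x])
    ((StronglyMeasurable.of_discrete (f := fun i => B i e)).comp_measurable
      (measurable_dutyCycle l))
    (fun x => (B _).le_of_opNorm_le (hβ _) e)
    ((integral_dutyCycle (fun i => B i e) hl).trans hequil)
    (fun s t hst => mul_le_mul_of_nonneg_left (Real.exp_le_exp.2 (neg_le_neg hst)) hδ.le)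
    (fun t => by positivity)
  have hu : Measurable fun s => dutyCycle l (θ s) := (measurable_dutyCycle l).comp hθ
  have hA : StronglyMeasurable fun s => B (dutyCycle l (θ s)) :=
    StronglyMeasurable.of_discrete.comp_measurable hu
  obtain ⟨Φ, hΦ, rfl⟩ := exists_isCaratheodorySolution hA (fun s => hβ _) e
  exact ⟨_, hu, Φ, hΦ, hΦ.not_tendsto_zero hA (fun s => hβ _) (fun s => hB _) hθδ hδ_small⟩

end Instability

section SwitchedMatrices

open Filter Set Topology

open scoped RealInnerProductSpace

theorem isGUAS_iff_forall_isCaratheodorySolution {n : Type*} [Fintype n] [DecidableEq n]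
    {B₀ B₁ : Matrix n n ℝ} :
    IsGUAS B₀ B₁ ↔ ∀ u : ℝ → Fin 2, Measurable u → ∀ Φ,
      IsCaratheodorySolution (fun s => toEuclideanCLM (𝕜 := ℝ) (![B₀, B₁] (u s))) Φ →
        Tendsto Φ atTop (𝓝 0) := by
  refine ⟨fun h u hu Φ hΦ => h u hu (Φ 0) Φ hΦ.continuous hΦ.eq_add_integral,
    fun h u hu X Φ hΦ hΦX => h u hu Φ ⟨hΦ, fun t ht => ?_⟩⟩
  have hΦ0 : Φ 0 = X := by simpa using hΦX 0 le_rfl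
  rw [hΦ0]
  exact hΦX t ht

theorem inner_toEuclideanCLM_self {n : Type*} [Fintype n] [DecidableEq n] (M : Matrix n n ℝ)
    (v : EuclideanSpace ℝ n) :
    ⟪v, toEuclideanCLM (𝕜 := ℝ) M v⟫ = v.ofLp ⬝ᵥ (M *ᵥ v.ofLp) := by
  rw [EuclideanSpace.inner_eq_star_dotProduct, ofLp_toEuclideanCLM, dotProduct_comm]
  rfl

theorem mulVec_ne_zero_of_isGUAS {n : Type*} [Fintype n] [DecidableEq n] {B₀ B₁ : Matrix n n ℝ}
    (h : IsGUAS B₀ B₁) (hB₀ : ∀ z, z ⬝ᵥ (B₀ *ᵥ z) ≤ 0) (hB₁ : ∀ z, z ⬝ᵥ (B₁ *ᵥ z) ≤ 0) {l : ℝ}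
    (hl : l ∈ Icc 0 1) {z : n → ℝ} (hz : z ≠ 0) : ((1 - l) • B₀ + l • B₁) *ᵥ z ≠ 0 := by
  intro hker
  have hdiss (i : Fin 2) (v : EuclideanSpace ℝ n) :
      ⟪v, toEuclideanCLM (𝕜 := ℝ) (![B₀, B₁] i) v⟫ ≤ 0 := by
    rw [inner_toEuclideanCLM_self]
    fin_cases i
    exacts [hB₀ _, hB₁ _]
  have hequil : (1 - l) • toEuclideanCLM (𝕜 := ℝ) B₀ (WithLp.toLp 2 z) +
      l • toEuclideanCLM (𝕜 := ℝ) B₁ (WithLp.toLp 2 z) = 0 := by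
    rw [toEuclideanCLM_toLp, toEuclideanCLM_toLp, ← WithLp.toLp_smul, ← WithLp.toLp_smul,
      ← WithLp.toLp_add, ← smul_mulVec, ← smul_mulVec, ← add_mulVec, hker, WithLp.toLp_zero]
  obtain ⟨u, hu, Φ, hΦ, hlim⟩ := exists_isCaratheodorySolution_not_tendsto_zero
    (B := fun i => toEuclideanCLM (𝕜 := ℝ) (![B₀, B₁] i)) hdiss hl
    ((WithLp.toLp_eq_zero 2).not.2 hz) hequil
  exact hlim (isGUAS_iff_forall_isCaratheodorySolution.1 h u hu Φ hΦ)

end SwitchedMatrices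

section ZeroDynamics

open Set

open scoped RealInnerProductSpace

variable {m n : Type*}

/-- The matrix `[[0, -Cᵀ], [C, D]]` of a mode of the switched system. -/
def zeroDynamicsMatrix (C : Matrix n m ℝ) (D : Matrix n n ℝ) : Matrix (m ⊕ n) (m ⊕ n) ℝ :=
  fromBlocks 0 (-Cᵀ) C D

theorem smul_add_smul_zeroDynamicsMatrix (C₀ C₁ : Matrix n m ℝ) (D₀ D₁ : Matrix n n ℝ) (l : ℝ) :
    (1 - l) • zeroDynamicsMatrix C₀ D₀ + l • zeroDynamicsMatrix C₁ D₁ =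
      zeroDynamicsMatrix ((1 - l) • C₀ + l • C₁) ((1 - l) • D₀ + l • D₁) := by
  simp only [zeroDynamicsMatrix, fromBlocks_smul, fromBlocks_add, smul_zero, add_zero,
    transpose_add, transpose_smul, smul_neg, neg_add]

variable [Fintype n]

theorem dotProduct_mulVec_neg_of_add_transpose {D : Matrix n n ℝ}
    (hD : ∀ y : n → ℝ, y ≠ 0 → y ⬝ᵥ ((Dᵀ + D) *ᵥ y) < 0) (y : n → ℝ) (hy : y ≠ 0) :
    y ⬝ᵥ (D *ᵥ y) < 0 := by
  have h := hD y hy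
  rw [add_mulVec, dotProduct_add, dotProduct_transpose_mulVec] at h
  linarith

theorem dotProduct_smul_add_smul_mulVec_neg {D₀ D₁ : Matrix n n ℝ}
    (hD₀ : ∀ y ≠ 0, y ⬝ᵥ (D₀ *ᵥ y) < 0) (hD₁ : ∀ y ≠ 0, y ⬝ᵥ (D₁ *ᵥ y) < 0) {l : ℝ}
    (hl : l ∈ Icc 0 1) (y : n → ℝ) (hy : y ≠ 0) :
    y ⬝ᵥ (((1 - l) • D₀ + l • D₁) *ᵥ y) < 0 := by
  rw [add_mulVec, smul_mulVec, smul_mulVec, dotProduct_add, dotProduct_smul, dotProduct_smul]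
  exact convex_Iio (0 : ℝ) (hD₀ y hy) (hD₁ y hy) (sub_nonneg.2 hl.2) hl.1 (sub_add_cancel 1 l)

theorem exists_pos_forall_dotProduct_mulVec_le {ι : Type*} [Finite ι] {D : ι → Matrix n n ℝ}
    (hD : ∀ i, ∀ y ≠ 0, y ⬝ᵥ (D i *ᵥ y) < 0) :
    ∃ c > 0, ∀ i y, y ⬝ᵥ (D i *ᵥ y) ≤ -(c * (y ⬝ᵥ y)) := by
  classical
  let _ : TopologicalSpace ι := ⊥
  have : DiscreteTopology ι := ⟨rfl⟩
  obtain ⟨c, hc, h⟩ := exists_pos_forall_mul_norm_pow_le (E := EuclideanSpace ℝ n)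
    (f := fun i v => -⟪v, toEuclideanCLM (𝕜 := ℝ) (D i) v⟫) finite_univ.isCompact two_ne_zero
    (continuous_prod_of_discrete_left.2 fun i => by simp only [Function.uncurry]; fun_prop)
    (fun i _ r _ v => by
      simp only [map_smul, inner_smul_left, inner_smul_right, conj_trivial]; ring)
    fun i _ v hv => by
      rw [inner_toEuclideanCLM_self]
      exact neg_pos.2 (hD i _ ((WithLp.ofLp_eq_zero 2).not.2 hv))
  refine ⟨c, hc, fun i y => ?_⟩
  have hy := h i (mem_univ i) (WithLp.toLp 2 y)
  rw [inner_toEuclideanCLM_self, EuclideanSpace.real_norm_sq_eq] at hy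
  simp only [dotProduct, ← sq] at hy ⊢
  linarith

variable [Fintype m]

theorem zeroDynamicsMatrix_mulVec (C : Matrix n m ℝ) (D : Matrix n n ℝ) (z : m ⊕ n → ℝ) :
    zeroDynamicsMatrix C D *ᵥ z =
      Sum.elim (-(Cᵀ *ᵥ (z ∘ Sum.inr))) (C *ᵥ (z ∘ Sum.inl) + D *ᵥ (z ∘ Sum.inr)) := by
  rw [zeroDynamicsMatrix, fromBlocks_mulVec, zero_mulVec, zero_add, neg_mulVec]

theorem dotProduct_zeroDynamicsMatrix_mulVec (C : Matrix n m ℝ) (D : Matrix n n ℝ)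
    (z : m ⊕ n → ℝ) :
    z ⬝ᵥ (zeroDynamicsMatrix C D *ᵥ z) = (z ∘ Sum.inr) ⬝ᵥ (D *ᵥ (z ∘ Sum.inr)) := by
  rw [zeroDynamicsMatrix_mulVec]
  nth_rw 1 [← Sum.elim_comp_inl_inr z]
  rw [sumElim_dotProduct_sumElim, dotProduct_neg, dotProduct_transpose_mulVec, dotProduct_add,
    neg_add_cancel_left]

theorem eq_zero_of_zeroDynamicsMatrix_mulVec_eq_zero {C : Matrix n m ℝ} {D : Matrix n n ℝ}
    (hC : ∀ x, C *ᵥ x = 0 → x = 0) (hD : ∀ y ≠ 0, y ⬝ᵥ (D *ᵥ y) < 0) {z : m ⊕ n → ℝ}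
    (hz : zeroDynamicsMatrix C D *ᵥ z = 0) : z = 0 := by
  have hy : z ∘ Sum.inr = 0 := by
    by_contra hy
    have h := hD _ hy
    rw [← dotProduct_zeroDynamicsMatrix_mulVec C, hz, dotProduct_zero] at h
    exact h.false
  have hx : z ∘ Sum.inl = 0 := by
    rw [zeroDynamicsMatrix_mulVec, hy, mulVec_zero, mulVec_zero, add_zero] at hz
    exact hC _ (congrArg (· ∘ Sum.inr) hz)
  rw [← Sum.elim_comp_inl_inr z, hx, hy, Sum.elim_zero_zero]

variable [DecidableEq m] [DecidableEq n]

variable (m n) in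
/-- The orthogonal projection `(x, y) ↦ (0, y)`. -/
def sndProjection : EuclideanSpace ℝ (m ⊕ n) →L[ℝ] EuclideanSpace ℝ (m ⊕ n) :=
  toEuclideanCLM (𝕜 := ℝ) (fromBlocks 0 0 0 1)

theorem norm_sndProjection_apply_sq (v : EuclideanSpace ℝ (m ⊕ n)) :
    ‖sndProjection m n v‖ ^ 2 = (v.ofLp ∘ Sum.inr) ⬝ᵥ (v.ofLp ∘ Sum.inr) := by
  rw [sndProjection, EuclideanSpace.real_norm_sq_eq, ofLp_toEuclideanCLM, fromBlocks_mulVec]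
  simp [dotProduct, sq]

theorem toEuclideanCLM_zeroDynamicsMatrix_sub_sndProjection (C : Matrix n m ℝ) (D : Matrix n n ℝ)
    (v : EuclideanSpace ℝ (m ⊕ n)) :
    toEuclideanCLM (𝕜 := ℝ) (zeroDynamicsMatrix C D) v -
        sndProjection m n (toEuclideanCLM (𝕜 := ℝ) (zeroDynamicsMatrix C D) v) =
      toEuclideanCLM (𝕜 := ℝ) (fromBlocks 0 (-Cᵀ) 0 0) (sndProjection m n v) := by
  have h : zeroDynamicsMatrix C D - fromBlocks 0 0 0 1 * zeroDynamicsMatrix C D =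
      fromBlocks 0 (-Cᵀ) 0 0 * fromBlocks 0 0 0 1 := by
    simp [zeroDynamicsMatrix, fromBlocks_multiply, sub_eq_add_neg, fromBlocks_neg, fromBlocks_add]
  have h_apply := congrArg (fun M => toEuclideanCLM (𝕜 := ℝ) M v) h
  simp only [map_sub, map_mul] at h_apply
  exact h_apply

theorem exists_forall_norm_sub_sndProjection_le {ι : Type*} [Finite ι] (C : ι → Matrix n m ℝ)
    (D : ι → Matrix n n ℝ) :
    ∃ K, 0 ≤ K ∧ ∀ i v, ‖toEuclideanCLM (𝕜 := ℝ) (zeroDynamicsMatrix (C i) (D i)) v -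
      sndProjection m n (toEuclideanCLM (𝕜 := ℝ) (zeroDynamicsMatrix (C i) (D i)) v)‖ ≤
        K * ‖sndProjection m n v‖ := by
  obtain ⟨K, hK⟩ := (finite_range fun i =>
    ‖toEuclideanCLM (𝕜 := ℝ) (fromBlocks 0 (-(C i)ᵀ) 0 (0 : Matrix n n ℝ))‖).bddAbove
  refine ⟨max K 0, le_max_right _ _, fun i v => ?_⟩
  rw [toEuclideanCLM_zeroDynamicsMatrix_sub_sndProjection]
  exact ContinuousLinearMap.le_of_opNorm_le _ ((hK (mem_range_self i)).trans (le_max_left _ _)) _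

theorem eq_zero_of_mem_segment_zeroDynamicsMatrix {C₀ C₁ : Matrix n m ℝ} {D₀ D₁ : Matrix n n ℝ}
    (hD₀ : ∀ y ≠ 0, y ⬝ᵥ (D₀ *ᵥ y) < 0) (hD₁ : ∀ y ≠ 0, y ⬝ᵥ (D₁ *ᵥ y) < 0)
    (hC : ∀ l ∈ Icc (0 : ℝ) 1, ∀ x, ((1 - l) • C₀ + l • C₁) *ᵥ x = 0 → x = 0)
    {L : EuclideanSpace ℝ (m ⊕ n) →L[ℝ] EuclideanSpace ℝ (m ⊕ n)}
    (hL : L ∈ segment ℝ (toEuclideanCLM (𝕜 := ℝ) (zeroDynamicsMatrix C₀ D₀))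
      (toEuclideanCLM (𝕜 := ℝ) (zeroDynamicsMatrix C₁ D₁)))
    {v : EuclideanSpace ℝ (m ⊕ n)} (hv : L v = 0) : v = 0 := by
  rw [segment_eq_image] at hL
  obtain ⟨l, hl, rfl⟩ := hL
  dsimp only at hv
  rw [← map_smul, ← map_smul, ← map_add, smul_add_smul_zeroDynamicsMatrix] at hv
  have hker := congrArg WithLp.ofLp hv
  rw [ofLp_toEuclideanCLM] at hker
  exact (WithLp.ofLp_eq_zero 2).1 <| eq_zero_of_zeroDynamicsMatrix_mulVec_eq_zero (hC l hl)
    (dotProduct_smul_add_smul_mulVec_neg hD₀ hD₁ hl) hker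

theorem isGUAS_zeroDynamicsMatrix {C₀ C₁ : Matrix n m ℝ} {D₀ D₁ : Matrix n n ℝ}
    (hD₀ : ∀ y ≠ 0, y ⬝ᵥ (D₀ *ᵥ y) < 0) (hD₁ : ∀ y ≠ 0, y ⬝ᵥ (D₁ *ᵥ y) < 0)
    (hC : ∀ l ∈ Icc (0 : ℝ) 1, ∀ x, ((1 - l) • C₀ + l • C₁) *ᵥ x = 0 → x = 0) :
    IsGUAS (zeroDynamicsMatrix C₀ D₀) (zeroDynamicsMatrix C₁ D₁) := by
  have mode_eq (i : Fin 2) : ![zeroDynamicsMatrix C₀ D₀, zeroDynamicsMatrix C₁ D₁] i =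
      zeroDynamicsMatrix (![C₀, C₁] i) (![D₀, D₁] i) := by
    fin_cases i <;> rfl
  obtain ⟨c, hc, hdiss⟩ := exists_pos_forall_dotProduct_mulVec_le (D := ![D₀, D₁]) <|
    Fin.forall_fin_two.2 ⟨hD₀, hD₁⟩
  obtain ⟨K, hK, hP⟩ := exists_forall_norm_sub_sndProjection_le ![C₀, C₁] ![D₀, D₁]
  refine isGUAS_iff_forall_isCaratheodorySolution.2 fun u hu Φ hΦ => ?_
  refine hΦ.tendsto_zero (P := sndProjection m n) ?_ ?_ (convex_segment _ _) ?_
    (fun _ hL _ => eq_zero_of_mem_segment_zeroDynamicsMatrix hD₀ hD₁ hC hL) hc hK ?_ ?_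
  · exact StronglyMeasurable.of_discrete
      (f := fun i => toEuclideanCLM (𝕜 := ℝ) (![_, _] i)) |>.comp_measurable hu
  · rw [segment_eq_image]
    exact isCompact_Icc.image (by fun_prop)
  · exact fun s => (Fin.forall_fin_two (p := fun i => toEuclideanCLM (𝕜 := ℝ) (![_, _] i) ∈ _)).2
      ⟨left_mem_segment _ _ _, right_mem_segment _ _ _⟩ (u s)
  · intro s v
    rw [inner_toEuclideanCLM_self, mode_eq, dotProduct_zeroDynamicsMatrix_mulVec,
      norm_sndProjection_apply_sq]
    exact hdiss (u s) _
  · intro s v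
    rw [mode_eq]
    exact hP (u s) v

theorem mulVec_ne_zero_of_isGUAS_zeroDynamicsMatrix {C₀ C₁ : Matrix n m ℝ} {D₀ D₁ : Matrix n n ℝ}
    (hD₀ : ∀ y, y ⬝ᵥ (D₀ *ᵥ y) ≤ 0) (hD₁ : ∀ y, y ⬝ᵥ (D₁ *ᵥ y) ≤ 0)
    (h : IsGUAS (zeroDynamicsMatrix C₀ D₀) (zeroDynamicsMatrix C₁ D₁)) {l : ℝ}
    (hl : l ∈ Icc 0 1) {x : m → ℝ} (hx : x ≠ 0) : ((1 - l) • C₀ + l • C₁) *ᵥ x ≠ 0 := by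
  intro hker
  have hz : Sum.elim x (0 : n → ℝ) ≠ 0 := fun hz => hx (congrArg (· ∘ Sum.inl) hz)
  refine mulVec_ne_zero_of_isGUAS h (fun z => ?_) (fun z => ?_) hl hz ?_
  · rw [dotProduct_zeroDynamicsMatrix_mulVec]
    exact hD₀ _
  · rw [dotProduct_zeroDynamicsMatrix_mulVec]
    exact hD₁ _
  · rw [smul_add_smul_zeroDynamicsMatrix, zeroDynamicsMatrix_mulVec, Sum.elim_comp_inl,
      Sum.elim_comp_inr, hker, mulVec_zero, mulVec_zero, add_zero, neg_zero, Sum.elim_zero_zero]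

end ZeroDynamics

theorem isGUAS_zero_dynamics_iff_injective_general {m n : Type*} [Fintype m] [Fintype n]
    [DecidableEq m] [DecidableEq n] {C₀ C₁ : Matrix n m ℝ} {D₀ D₁ : Matrix n n ℝ}
    (hD₀ : ∀ y : n → ℝ, y ≠ 0 → y ⬝ᵥ ((D₀ᵀ + D₀) *ᵥ y) < 0)
    (hD₁ : ∀ y : n → ℝ, y ≠ 0 → y ⬝ᵥ ((D₁ᵀ + D₁) *ᵥ y) < 0) :
    IsGUAS (fromBlocks 0 (-C₀ᵀ) C₀ D₀) (fromBlocks 0 (-C₁ᵀ) C₁ D₁) ↔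
      ∀ l ∈ Set.Icc (0 : ℝ) 1, ∀ x : m → ℝ, ((1 - l) • C₀ + l • C₁) *ᵥ x = 0 → x = 0 := by
  have neg_D₀ := dotProduct_mulVec_neg_of_add_transpose hD₀
  have neg_D₁ := dotProduct_mulVec_neg_of_add_transpose hD₁
  have nonpos {D : Matrix n n ℝ} (hD : ∀ y ≠ 0, y ⬝ᵥ (D *ᵥ y) < 0) (y : n → ℝ) :
      y ⬝ᵥ (D *ᵥ y) ≤ 0 := by
    rcases eq_or_ne y 0 with rfl | hy
    exacts [(zero_dotProduct _).le, (hD y hy).le]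
  exact ⟨fun h l hl x => not_imp_not.1 <|
      mulVec_ne_zero_of_isGUAS_zeroDynamicsMatrix (nonpos neg_D₀) (nonpos neg_D₁) h hl,
    isGUAS_zeroDynamicsMatrix neg_D₀ neg_D₁⟩

/-- Let `D₀ᵀ+D₀` and `D₁ᵀ+D₁` be negative definite. The switched
system defined by the block matrices `B₀ = [[0, -C₀ᵀ],[C₀, D₀]]` and
`B₁ = [[0, -C₁ᵀ],[C₁, D₁]]` is GUAS if and only if for every `λ ∈ [0,1]` the matrix
`C_λ = (1-λ)C₀ + λC₁` is one-to-one. -/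
theorem isGUAS_zero_dynamics_iff_injective {k k' : ℕ}
    (C₀ C₁ : Matrix (Fin k') (Fin k) ℝ)
    (D₀ D₁ : Matrix (Fin k') (Fin k') ℝ)
    (hD₀ : ∀ y : Fin k' → ℝ, y ≠ 0 → y ⬝ᵥ ((D₀ᵀ + D₀) *ᵥ y) < 0)
    (hD₁ : ∀ y : Fin k' → ℝ, y ≠ 0 → y ⬝ᵥ ((D₁ᵀ + D₁) *ᵥ y) < 0) :
    IsGUAS (Matrix.fromBlocks 0 (-C₀ᵀ) C₀ D₀) (Matrix.fromBlocks 0 (-C₁ᵀ) C₁ D₁) ↔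
      ∀ l ∈ Set.Icc (0:ℝ) 1,
        ∀ x : Fin k → ℝ, ((1 - l) • C₀ + l • C₁) *ᵥ x = 0 → x = 0 := by
  exact isGUAS_zero_dynamics_iff_injective_general hD₀ hD₁

end
end

section
/- Let a, b ∈ ℝ and d₀, d₁ > 0, and consider the 3×3 real matrices B₀ = [[0, a, −1],[−a, 0, 0],[1, 0, −d₀]] and B₁ = [[0, b, 0],[−b, 0, −1],[0, 1, −d₁]]. Then the switched system defined by {B₀, B₁} is GUAS if and only if ab > 0. -/
open Matrix MeasureTheory

noncomputable section

/-!
Neither field increases the norm, and `ab` decides whether switching can avoid the damping.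

If `ab ≤ 0`, then `l a + m b = 0` for some `l, m ≥ 0` that are not both zero, and `v = (m, -l, 0)`
is an equilibrium of `l B₀ + m B₁`. Alternating `B₀` for time `l h` and `B₁` for time `m h` moves
`v` by `O(h²)` only. Taking steps `hₙ` with `∑ hₙ = ∞` and `∑ hₙ²` small, the norm being
nonincreasing along both flows, gives a trajectory that never gets far from `v`.

If `ab > 0`, the norm alone fails to decrease strictly on the plane `z = 0`. Matrosov's idea is to
use two further functions: `V`, nondecreasing where the norm is stationary, and `W`, strictly
increasing where moreover `V` is stationary. On a compact annulus, `W + N V - (C / 2) ‖·‖²` with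
large `N` and then large `C` increases at a rate bounded below along every field, so no trajectory
stays in the annulus; since the norm is nonincreasing, every trajectory tends to `0`.
-/

open Filter Set Topology

section Selection

variable {E κ : Type*} [NormedAddCommGroup E] [MeasurableSpace κ] [MeasurableSingletonClass κ]

lemma intervalIntegrable_apply_of_finite_image {g : κ → ℝ → E} (hg : ∀ k, Continuous (g k))
    {σ : ℝ → κ} (hσ : Measurable σ) {a b : ℝ} (hfin : (σ '' uIcc a b).Finite) :
    IntervalIntegrable (fun s ↦ g (σ s) s) volume a b := by
  classical
  have hpiece (k : κ) : IntervalIntegrable ((σ ⁻¹' {k}).indicator (g k)) volume a b :=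
    have hk := (hg k).intervalIntegrable a b
    have hmeas := hσ (measurableSet_singleton k)
    ⟨hk.1.indicator hmeas, hk.2.indicator hmeas⟩
  refine (IntervalIntegrable.sum hfin.toFinset fun k _ ↦ hpiece k).congr_uIoo fun s hs ↦ ?_
  have hmem : σ s ∈ hfin.toFinset :=
    hfin.mem_toFinset.2 (mem_image_of_mem σ (uIoo_subset_uIcc_self hs))
  simp [indicator_apply, hmem]

end Selection

section Trajectory

variable {ι E : Type*} [MeasurableSpace ι] [NormedAddCommGroup E] [NormedSpace ℝ E]

/-- `Φ` is the Carathéodory solution on `[0, ∞)` of `ẋ = L (u t) x` started at `Φ 0`, for the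
switching law `u`; nothing but continuity is required at negative times. -/
structure IsTrajectory (L : ι → E →L[ℝ] E) (u : ℝ → ι) (Φ : ℝ → E) : Prop where
  measurable : Measurable u
  continuous : Continuous Φ
  eq_add_integral : ∀ t, 0 ≤ t → Φ t = Φ 0 + ∫ s in (0 : ℝ)..t, L (u s) (Φ s)

namespace IsTrajectory

variable [Finite ι] [MeasurableSingletonClass ι] {L : ι → E →L[ℝ] E} {u : ℝ → ι} {Φ : ℝ → E}

lemma intervalIntegrable (hΦ : IsTrajectory L u Φ) (a b : ℝ) :
    IntervalIntegrable (fun s ↦ L (u s) (Φ s)) volume a b :=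
  intervalIntegrable_apply_of_finite_image (fun i ↦ (L i).continuous.comp hΦ.continuous)
    hΦ.measurable (toFinite _)

lemma sub_eq_integral (hΦ : IsTrajectory L u Φ) {s t : ℝ} (hs : 0 ≤ s) (ht : 0 ≤ t) :
    Φ t - Φ s = ∫ r in s..t, L (u r) (Φ r) := by
  rw [hΦ.eq_add_integral t ht, hΦ.eq_add_integral s hs, add_sub_add_left_eq_sub,
    intervalIntegral.integral_interval_sub_left (hΦ.intervalIntegrable _ _)
      (hΦ.intervalIntegrable _ _)]

lemma exists_lipschitzOnWith (hΦ : IsTrajectory L u Φ) {s t : ℝ} (hs : 0 ≤ s) :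
    ∃ K, LipschitzOnWith K Φ (Icc s t) := by
  obtain ⟨R, hR⟩ :=
    (isCompact_Icc (a := s) (b := t)).exists_bound_of_continuousOn hΦ.continuous.continuousOn
  obtain ⟨M, hM⟩ := Finite.bddAbove_range fun i ↦ ‖L i‖
  have hspeed (r : ℝ) (hr : r ∈ Icc s t) : ‖L (u r) (Φ r)‖ ≤ M * R :=
    (L (u r)).le_of_opNorm_le_of_le (hM (mem_range_self _)) (hR r hr)
  refine ⟨_, LipschitzOnWith.of_dist_le' (K := M * R) fun p hp q hq ↦ ?_⟩
  rw [dist_eq_norm, hΦ.sub_eq_integral (hs.trans hq.1) (hs.trans hp.1), Real.dist_eq]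
  exact intervalIntegral.norm_integral_le_of_norm_le_const fun r hr ↦
    hspeed r (uIcc_subset_Icc hq hp (uIoc_subset_uIcc hr))

lemma ae_hasDerivAt [CompleteSpace E] (hΦ : IsTrajectory L u Φ) :
    ∀ᵐ t, 0 < t → HasDerivAt Φ (L (u t) (Φ t)) t := by
  have hprimitive := ae_all_iff.2 fun n : ℕ ↦
    (hΦ.intervalIntegrable 0 n).ae_hasDerivAt_integral
  filter_upwards [hprimitive] with t ht htpos
  obtain ⟨n, hn⟩ := exists_nat_ge t
  have hderiv := ht n (Icc_subset_uIcc ⟨htpos.le, hn⟩) 0 left_mem_uIcc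
  refine (hderiv.const_add (Φ 0)).congr_of_eventuallyEq ?_
  filter_upwards [Ioi_mem_nhds htpos] with s hs using hΦ.eq_add_integral s hs.le

end IsTrajectory

end Trajectory

section StrictLyapunov

variable {ι E : Type*} [MeasurableSpace ι] [Finite ι] [MeasurableSingletonClass ι]
  [NormedAddCommGroup E] [NormedSpace ℝ E] [FiniteDimensional ℝ E]
  {L : ι → E →L[ℝ] E} {u : ℝ → ι} {Φ : ℝ → E} {H : E → ℝ}

namespace IsTrajectory

lemma absolutelyContinuousOnInterval_comp (hΦ : IsTrajectory L u Φ) (hH : ContDiff ℝ 1 H)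
    {s t : ℝ} (hs : 0 ≤ s) (hst : s ≤ t) : AbsolutelyContinuousOnInterval (H ∘ Φ) s t := by
  obtain ⟨K, hK⟩ := hΦ.exists_lipschitzOnWith (t := t) hs
  obtain ⟨R, hR⟩ :=
    (isCompact_Icc (a := s) (b := t)).exists_bound_of_continuousOn hΦ.continuous.continuousOn
  have : ProperSpace E := FiniteDimensional.proper_real E
  obtain ⟨K', hK'⟩ := hH.contDiffOn.exists_lipschitzOnWith one_ne_zero
    (convex_closedBall (0 : E) R) (isCompact_closedBall 0 R)
  have hlip : LipschitzOnWith (K' * K) (H ∘ Φ) (Icc s t) :=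
    hK'.comp hK fun r hr ↦ mem_closedBall_zero_iff.2 (hR r hr)
  rw [← uIcc_of_le hst] at hlip
  exact hlip.absolutelyContinuousOnInterval

lemma add_mul_sub_le_of_le_fderiv (hΦ : IsTrajectory L u Φ) (hH : ContDiff ℝ 1 H) {ε s t : ℝ}
    (hs : 0 ≤ s) (hst : s ≤ t)
    (hε : ∀ r ∈ Icc s t, ∀ i, ε ≤ fderiv ℝ H (Φ r) (L i (Φ r))) :
    H (Φ s) + ε * (t - s) ≤ H (Φ t) := by
  have hac := hΦ.absolutelyContinuousOnInterval_comp hH hs hst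
  have hderiv : ∀ᵐ r ∂volume.restrict (Icc s t), ε ≤ deriv (H ∘ Φ) r := by
    rw [← restrict_Ioc_eq_restrict_Icc, ae_restrict_iff' measurableSet_Ioc]
    filter_upwards [hΦ.ae_hasDerivAt] with r hr hrmem
    have hchain := ((hH.differentiable one_ne_zero) (Φ r)).hasFDerivAt.comp_hasDerivAt r
      (hr (hs.trans_lt hrmem.1))
    rw [hchain.deriv]
    exact hε r (Ioc_subset_Icc_self hrmem) (u r)
  have hintegral : ∫ _ in s..t, ε ≤ ∫ r in s..t, deriv (H ∘ Φ) r :=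
    intervalIntegral.integral_mono_ae_restrict hst intervalIntegrable_const
      hac.intervalIntegrable_deriv hderiv
  rw [hac.integral_deriv_eq_sub, intervalIntegral.integral_const, smul_eq_mul,
    mul_comm] at hintegral
  exact le_sub_iff_add_le'.1 hintegral

theorem exists_notMem_of_fderiv_pos (hΦ : IsTrajectory L u Φ) (hH : ContDiff ℝ 1 H) {K : Set E}
    (hK : IsCompact K) (hpos : ∀ i, ∀ v ∈ K, 0 < fderiv ℝ H v (L i v)) :
    ∃ t, 0 ≤ t ∧ Φ t ∉ K := by
  by_contra! hstay
  have hcont (i : ι) : Continuous fun v ↦ fderiv ℝ H v (L i v) :=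
    (hH.continuous_fderiv one_ne_zero).clm_apply (L i).continuous
  choose δ hδpos hδ using fun i ↦ hK.exists_forall_le' (hcont i).continuousOn (hpos i)
  have : Nonempty ι := ⟨u 0⟩
  obtain ⟨j, hj⟩ := Finite.exists_min δ
  obtain ⟨M, hM⟩ := hK.exists_bound_of_continuousOn hH.continuous.continuousOn
  have hgrowth (t : ℝ) (ht : 0 ≤ t) : δ j * t ≤ 2 * M := by
    have hle := hΦ.add_mul_sub_le_of_le_fderiv hH le_rfl ht fun r hr i ↦
      (hj i).trans (hδ i _ (hstay r hr.1))
    have h0 := abs_le.1 (hM _ (hstay 0 le_rfl))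
    have ht := abs_le.1 (hM _ (hstay t ht))
    linarith
  obtain ⟨t, ht, hlt⟩ := ((eventually_ge_atTop 0).and
    ((tendsto_id.const_mul_atTop (hδpos j)).eventually_gt_atTop (2 * M))).exists
  exact (hgrowth t ht).not_gt hlt

end IsTrajectory

end StrictLyapunov

section Matrosov

lemma eventually_forall_pos_add_mul_of_isCompact {X : Type*} [TopologicalSpace X] {K : Set X}
    (hK : IsCompact K) {f g : X → ℝ} (hf : Continuous f) (hg : Continuous g)
    (hg0 : ∀ v ∈ K, 0 ≤ g v) (hpos : ∀ v ∈ K, g v = 0 → 0 < f v) :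
    ∀ᶠ C in atTop, ∀ v ∈ K, 0 < f v + C * g v := by
  have hgpos : ∀ v ∈ K ∩ {v | f v ≤ 0}, 0 < g v := fun v hv ↦
    (hg0 v hv.1).lt_of_ne' fun h ↦ (hpos v hv.1 h).not_ge hv.2
  have hquot : ContinuousOn (fun v ↦ -f v / g v) (K ∩ {v | f v ≤ 0}) :=
    hf.neg.continuousOn.div hg.continuousOn fun v hv ↦ (hgpos v hv).ne'
  obtain ⟨M, hM⟩ := (hK.inter_right (isClosed_le hf continuous_const)).bddAbove_image hquot
  filter_upwards [eventually_gt_atTop M, eventually_ge_atTop 0] with C hMC hC v hv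
  rcases lt_or_ge 0 (f v) with hfv | hfv
  · exact add_pos_of_pos_of_nonneg hfv (mul_nonneg hC (hg0 v hv))
  · have hlt := (hM (mem_image_of_mem _ ⟨hv, hfv⟩)).trans_lt hMC
    rw [div_lt_iff₀ (hgpos v ⟨hv, hfv⟩)] at hlt
    linarith

lemma exists_forall_pos_of_nested {X ι : Type*} [TopologicalSpace X] [Finite ι] {K : Set X}
    (hK : IsCompact K) {f g k : ι → X → ℝ} (hf : ∀ i, Continuous (f i))
    (hg : ∀ i, Continuous (g i)) (hk : ∀ i, Continuous (k i))
    (hf0 : ∀ i, ∀ v ∈ K, 0 ≤ f i v) (hg0 : ∀ i, ∀ v ∈ K, f i v = 0 → 0 ≤ g i v)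
    (hkpos : ∀ i, ∀ v ∈ K, f i v = 0 → g i v = 0 → 0 < k i v) :
    ∃ N C : ℝ, ∀ i, ∀ v ∈ K, 0 < k i v + N * g i v + C * f i v := by
  have hinner (i : ι) : ∀ᶠ N in atTop, ∀ v ∈ K ∩ {v | f i v = 0}, 0 < k i v + N * g i v :=
    eventually_forall_pos_add_mul_of_isCompact
      (hK.inter_right (isClosed_eq (hf i) continuous_const)) (hk i) (hg i)
      (fun v hv ↦ hg0 i v hv.1 hv.2) fun v hv ↦ hkpos i v hv.1 hv.2
  obtain ⟨N, hN⟩ := (eventually_all.2 hinner).exists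
  have houter (i : ι) : ∀ᶠ C in atTop, ∀ v ∈ K, 0 < k i v + N * g i v + C * f i v :=
    eventually_forall_pos_add_mul_of_isCompact hK ((hk i).add (continuous_const.mul (hg i)))
      (hf i) (hf0 i) fun v hv hfv ↦ hN i v ⟨hv, hfv⟩
  obtain ⟨C, hC⟩ := (eventually_all.2 houter).exists
  exact ⟨N, C, hC⟩

variable {ι E : Type*} [NormedAddCommGroup E] [InnerProductSpace ℝ E]

/-- `A` is dissipative, that is, the flow of `ẋ = A x` does not increase the norm. -/
def IsDissipative (A : E →L[ℝ] E) : Prop := ∀ v, inner ℝ v (A v) ≤ 0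

namespace IsTrajectory

variable [MeasurableSpace ι] [Finite ι] [MeasurableSingletonClass ι] [FiniteDimensional ℝ E]
  {L : ι → E →L[ℝ] E} {u : ℝ → ι} {Φ : ℝ → E}

lemma antitoneOn_norm (hΦ : IsTrajectory L u Φ) (hL : ∀ i, IsDissipative (L i)) :
    AntitoneOn (fun t ↦ ‖Φ t‖) (Ici 0) := by
  intro s hs t _ hst
  have hH : ContDiff ℝ 1 fun v : E ↦ -‖v‖ ^ 2 := (contDiff_norm_sq ℝ).neg
  have hle := hΦ.add_mul_sub_le_of_le_fderiv hH (ε := 0) hs hst fun r _ i ↦ by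
    simpa [fderiv_norm_sq_apply] using
      mul_nonpos_of_nonneg_of_nonpos two_pos.le (hL i (Φ r))
  rw [zero_mul, add_zero, neg_le_neg_iff] at hle
  exact le_of_sq_le_sq hle (norm_nonneg _)

lemma tendsto_zero_of_exits_annuli (hΦ : IsTrajectory L u Φ) (hL : ∀ i, IsDissipative (L i))
    (hexit : ∀ r R, 0 < r → ∃ t, 0 ≤ t ∧ Φ t ∉ Metric.closedBall 0 R \ Metric.ball 0 r) :
    Tendsto Φ atTop (𝓝 0) := by
  have hanti := hΦ.antitoneOn_norm hL
  rw [Metric.tendsto_atTop]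
  intro r hr
  obtain ⟨s, hs, hout⟩ := hexit r ‖Φ 0‖ hr
  have hsmall : ‖Φ s‖ < r := by
    by_contra! hrs
    exact hout ⟨mem_closedBall_zero_iff.2 (hanti self_mem_Ici hs hs), by simpa using hrs⟩
  refine ⟨s, fun t hst ↦ ?_⟩
  rw [dist_zero_right]
  exact (hanti hs (mem_Ici.2 (hs.trans hst)) hst).trans_lt hsmall

theorem tendsto_zero_of_matrosov (hΦ : IsTrajectory L u Φ) (hL : ∀ i, IsDissipative (L i))
    {V W : E → ℝ} (hV : ContDiff ℝ 1 V) (hW : ContDiff ℝ 1 W)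
    (hV0 : ∀ i v, inner ℝ v (L i v) = 0 → 0 ≤ fderiv ℝ V v (L i v))
    (hWpos : ∀ i v, v ≠ 0 → inner ℝ v (L i v) = 0 → fderiv ℝ V v (L i v) = 0 →
      0 < fderiv ℝ W v (L i v)) :
    Tendsto Φ atTop (𝓝 0) := by
  refine hΦ.tendsto_zero_of_exits_annuli hL fun r R hr ↦ ?_
  have hcont {F : E → ℝ} (hF : ContDiff ℝ 1 F) (i : ι) : Continuous fun v ↦ fderiv ℝ F v (L i v) :=
    (hF.continuous_fderiv one_ne_zero).clm_apply (L i).continuous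
  have : ProperSpace E := FiniteDimensional.proper_real E
  have hK : IsCompact (Metric.closedBall (0 : E) R \ Metric.ball 0 r) :=
    (isCompact_closedBall 0 R).diff Metric.isOpen_ball
  obtain ⟨N, C, hpos⟩ := exists_forall_pos_of_nested hK (f := fun i v ↦ -inner ℝ v (L i v))
    (fun i ↦ (continuous_id.inner (L i).continuous).neg) (hcont hV) (hcont hW)
    (fun i v _ ↦ neg_nonneg.2 (hL i v)) (fun i v _ h ↦ hV0 i v (neg_eq_zero.1 h))
    (fun i v hv h ↦ hWpos i v (fun h0 ↦ hv.2 (by simpa [h0] using hr)) (neg_eq_zero.1 h))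
  have hH : ContDiff ℝ 1 fun v ↦ W v + N * V v - C / 2 * ‖v‖ ^ 2 :=
    (hW.add (contDiff_const.mul hV)).sub (contDiff_const.mul (contDiff_norm_sq ℝ))
  refine hΦ.exists_notMem_of_fderiv_pos hH hK fun i v hv ↦ ?_
  have hdW := (hW.differentiable one_ne_zero v).hasFDerivAt
  have hdV := (hV.differentiable one_ne_zero v).hasFDerivAt
  have hdH := (hdW.fun_add (hdV.const_mul N)).fun_sub
    ((hasStrictFDerivAt_norm_sq v).hasFDerivAt.const_mul (C / 2))
  rw [hdH.fderiv]
  convert hpos i v hv using 1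
  simp only [_root_.sub_apply, _root_.add_apply, _root_.smul_apply, smul_eq_mul,
    coe_innerSL_apply, nsmul_eq_mul, Nat.cast_ofNat]
  ring

end IsTrajectory

end Matrosov

section LinearFlow

variable {E : Type*} [NormedAddCommGroup E] [NormedSpace ℝ E]

lemma exists_norm_sub_le_mul_sq_of_deriv_eq_zero {f : ℝ → E} (hf : ContDiff ℝ 2 f)
    (hf' : HasDerivAt f 0 0) : ∃ C, 0 ≤ C ∧ ∀ h ∈ Icc (0 : ℝ) 1, ‖f h - f 0‖ ≤ C * h ^ 2 := by
  obtain ⟨C, hC⟩ := exists_taylor_mean_remainder_bound (n := 1) zero_le_one hf.contDiffOn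
  have hderiv : derivWithin f (Icc 0 1) 0 = 0 :=
    hf'.hasDerivWithinAt.derivWithin (uniqueDiffOn_Icc one_pos 0 (by simp))
  have hbound (h : ℝ) (hh : h ∈ Icc (0 : ℝ) 1) : ‖f h - f 0‖ ≤ C * h ^ 2 := by
    simpa [taylorWithinEval_succ, iteratedDerivWithin_one, hderiv] using hC h hh
  exact ⟨C, by simpa using (norm_nonneg _).trans (hbound 1 (by simp)), hbound⟩

variable [CompleteSpace E]

lemma hasDerivAt_exp_smul_apply (A : E →L[ℝ] E) (x : E) (t : ℝ) :
    HasDerivAt (fun s : ℝ ↦ NormedSpace.exp (s • A) x) (A (NormedSpace.exp (t • A) x)) t := by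
  simpa using (hasDerivAt_exp_smul_const' (𝕂 := ℝ) A t).clm_apply (hasDerivAt_const t x)

lemma integral_apply_exp_smul_apply (A : E →L[ℝ] E) (x : E) (s t : ℝ) :
    ∫ r in s..t, A (NormedSpace.exp ((r - s) • A) x) = NormedSpace.exp ((t - s) • A) x - x := by
  have hderiv (r : ℝ) := (hasDerivAt_exp_smul_apply A x (r - s)).comp_sub_const r s
  have hcont : Continuous fun r ↦ A (NormedSpace.exp ((r - s) • A) x) :=
    A.continuous.comp (continuous_iff_continuousAt.2 fun r ↦ (hderiv r).continuousAt)
  rw [intervalIntegral.integral_eq_sub_of_hasDerivAt (fun r _ ↦ hderiv r)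
    (hcont.intervalIntegrable s t)]
  simp

lemma contDiff_exp_smul (A : E →L[ℝ] E) (n : WithTop ℕ∞) :
    ContDiff ℝ n fun t : ℝ ↦ NormedSpace.exp (t • A) := by
  have hexp : AnalyticOnNhd ℝ (NormedSpace.exp : (E →L[ℝ] E) → E →L[ℝ] E) univ :=
    fun x _ ↦ NormedSpace.exp_analytic x
  exact hexp.contDiff.comp (contDiff_id.smul contDiff_const)

lemma exists_norm_exp_exp_sub_le {A B : E →L[ℝ] E} {l m : ℝ} {v : E}
    (hv : l • A v + m • B v = 0) :
    ∃ C, 0 ≤ C ∧ ∀ h ∈ Icc (0 : ℝ) 1,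
      ‖NormedSpace.exp ((m * h) • B) (NormedSpace.exp ((l * h) • A) v) - v‖ ≤ C * h ^ 2 := by
  have hsmooth (c : ℝ) (D : E →L[ℝ] E) : ContDiff ℝ 2 fun h : ℝ ↦ NormedSpace.exp ((c * h) • D) :=
    (contDiff_exp_smul D 2).comp (contDiff_const.mul contDiff_id)
  have hderiv (c : ℝ) (D : E →L[ℝ] E) :
      HasDerivAt (fun h : ℝ ↦ NormedSpace.exp ((c * h) • D)) (c • D) 0 := by
    simpa [smul_smul, mul_comm] using hasDerivAt_exp_smul_const (𝕂 := ℝ) (c • D) 0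
  have hzero : HasDerivAt
      (fun h : ℝ ↦ NormedSpace.exp ((m * h) • B) (NormedSpace.exp ((l * h) • A) v)) 0 0 := by
    have hcomp := (hderiv m B).clm_apply ((hderiv l A).clm_apply (hasDerivAt_const 0 v))
    refine hcomp.congr_deriv ?_
    simpa [add_comm] using hv
  simpa using exists_norm_sub_le_mul_sq_of_deriv_eq_zero
    ((hsmooth m B).clm_apply ((hsmooth l A).clm_apply contDiff_const)) hzero

end LinearFlow

section PiecewiseConstantLaw

/-- The index `n` of the interval `[T n, T (n + 1))` containing `t`, for a nondecreasing unbounded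
sequence `T`. The value is `0` if `t < T 0`, and also, as a junk value, if no `T (n + 1)` exceeds
`t`. -/
def intervalIndex (T : ℕ → ℝ) (t : ℝ) : ℕ := sInf {n | t < T (n + 1)}

variable {T : ℕ → ℝ}

lemma lt_apply_intervalIndex_add_one (hT : Tendsto T atTop atTop) (t : ℝ) :
    t < T (intervalIndex T t + 1) :=
  Nat.sInf_mem (s := {n | t < T (n + 1)})
    ((hT.comp (tendsto_add_atTop_nat 1)).eventually_gt_atTop t).exists

lemma monotone_intervalIndex (hT : Tendsto T atTop atTop) : Monotone (intervalIndex T) :=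
  fun _ t hst ↦ Nat.sInf_le (hst.trans_lt (lt_apply_intervalIndex_add_one hT t))

lemma apply_intervalIndex_le {t : ℝ} (ht : T 0 ≤ t) : T (intervalIndex T t) ≤ t := by
  rcases h : intervalIndex T t with _ | k
  · exact ht
  · have hk : k ∉ {n | t < T (n + 1)} :=
      Nat.notMem_of_lt_sInf (h ▸ Nat.lt_succ_self k : k < intervalIndex T t)
    exact not_lt.1 hk

lemma intervalIndex_eq (hmono : Monotone T) {n : ℕ} {t : ℝ} (ht : t ∈ Ico (T n) (T (n + 1))) :
    intervalIndex T t = n := by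
  refine le_antisymm (Nat.sInf_le ht.2) (le_csInf ⟨n, ht.2⟩ fun k hk ↦ ?_)
  exact Nat.lt_succ_iff.1 (hmono.reflect_lt (ht.1.trans_lt hk))

variable {ι E : Type*} [MeasurableSpace ι] [NormedAddCommGroup E]

lemma intervalIntegrable_apply_intervalIndex (hT : Tendsto T atTop atTop) {g : ℕ → ℝ → E}
    (hg : ∀ n, Continuous (g n)) (a b : ℝ) :
    IntervalIntegrable (fun s ↦ g (intervalIndex T s) s) volume a b := by
  have hindex := monotone_intervalIndex hT
  refine intervalIntegrable_apply_of_finite_image hg hindex.measurable ?_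
  exact (finite_Iic (intervalIndex T (max a b))).subset
    (image_subset_iff.2 fun s hs ↦ hindex hs.2)

variable [NormedSpace ℝ E]

lemma integral_apply_intervalIndex (hmono : Monotone T) (g : ℕ → ℝ → E) {n : ℕ} {t : ℝ}
    (ht : t ∈ Icc (T n) (T (n + 1))) :
    ∫ s in T n..t, g (intervalIndex T s) s = ∫ s in T n..t, g n s :=
  intervalIntegral.integral_congr_Ioo_of_le ht.1 fun s hs ↦ by
    rw [intervalIndex_eq hmono ⟨hs.1.le, hs.2.trans_le ht.2⟩]

variable [CompleteSpace E]

theorem exists_isTrajectory_of_switching_times (L : ι → E →L[ℝ] E) (i : ℕ → ι)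
    (hT0 : T 0 = 0) (hmono : Monotone T) (hT : Tendsto T atTop atTop) (v : E) :
    ∃ u Φ, IsTrajectory L u Φ ∧ Φ 0 = v ∧
      ∀ n, Φ (T (n + 1)) = NormedSpace.exp ((T (n + 1) - T n) • L (i n)) (Φ (T n)) := by
  let x : ℕ → E := Nat.rec v fun n y ↦ NormedSpace.exp ((T (n + 1) - T n) • L (i n)) y
  let ψ (n : ℕ) (t : ℝ) : E := NormedSpace.exp ((t - T n) • L (i n)) (x n)
  let ν := intervalIndex T
  have hψ (n : ℕ) : Continuous (ψ n) := continuous_iff_continuousAt.2 fun t ↦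
    ((hasDerivAt_exp_smul_apply (L (i n)) (x n) (t - T n)).comp_sub_const t (T n)).continuousAt
  have hint (a b : ℝ) : IntervalIntegrable (fun s ↦ L (i (ν s)) (ψ (ν s) s)) volume a b :=
    intervalIntegrable_apply_intervalIndex hT (fun n ↦ (L (i n)).continuous.comp (hψ n)) a b
  let Φ (t : ℝ) : E := v + ∫ s in (0 : ℝ)..t, L (i (ν s)) (ψ (ν s) s)
  have hpiece (n : ℕ) (hn : Φ (T n) = x n) (t : ℝ) (ht : t ∈ Icc (T n) (T (n + 1))) :
      Φ t = ψ n t := by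
    calc Φ t = Φ (T n) + ∫ s in T n..t, L (i (ν s)) (ψ (ν s) s) := by
          simp only [Φ, add_assoc, intervalIntegral.integral_add_adjacent_intervals (hint _ _)
            (hint _ _)]
      _ = Φ (T n) + ∫ s in T n..t, L (i n) (ψ n s) :=
          congrArg _ (integral_apply_intervalIndex hmono (fun n s ↦ L (i n) (ψ n s)) ht)
      _ = ψ n t := by rw [integral_apply_exp_smul_apply, hn, add_sub_cancel]
  have hnode (n : ℕ) : Φ (T n) = x n := by
    induction n with
    | zero => simp [Φ, x, hT0]
    | succ n ih => exact hpiece n ih _ ⟨hmono n.le_succ, le_rfl⟩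
  have hΦ (t : ℝ) (ht : 0 ≤ t) : Φ t = ψ (ν t) t :=
    hpiece _ (hnode _) t ⟨apply_intervalIndex_le (hT0.trans_le ht),
      (lt_apply_intervalIndex_add_one hT t).le⟩
  have hΦ0 : Φ 0 = v := by simp [Φ]
  refine ⟨i ∘ ν, Φ, ⟨measurable_from_nat.comp (monotone_intervalIndex hT).measurable,
    continuous_const.add (intervalIntegral.continuous_primitive hint 0), fun t ht ↦ ?_⟩, hΦ0,
    fun n ↦ by rw [hnode, hnode]⟩
  rw [hΦ0]
  refine congrArg (v + ·) (intervalIntegral.integral_congr fun s hs ↦ ?_)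
  simp only [Function.comp_apply, hΦ s (uIcc_of_le ht ▸ hs).1]

theorem exists_isTrajectory_alternating (L : ι → E →L[ℝ] E) (i j : ι) {l m : ℝ} (hl : 0 ≤ l)
    (hm : 0 ≤ m) (hlm : 0 < l + m) {h : ℕ → ℝ} (hh : ∀ n, 0 ≤ h n)
    (hdiv : Tendsto (fun n ↦ ∑ k ∈ Finset.range n, h k) atTop atTop) (v : E) :
    ∃ u Φ, ∃ S : ℕ → ℝ, IsTrajectory L u Φ ∧ Tendsto S atTop atTop ∧ Φ (S 0) = v ∧
      ∀ n, Φ (S (n + 1)) =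
        NormedSpace.exp ((m * h n) • L j) (NormedSpace.exp ((l * h n) • L i) (Φ (S n))) := by
  let τ (k : ℕ) : ℝ := if Even k then l * h (k / 2) else m * h (k / 2)
  let T (n : ℕ) : ℝ := ∑ k ∈ Finset.range n, τ k
  have hτ (k : ℕ) : 0 ≤ τ k := by
    dsimp only [τ]
    split_ifs <;> exact mul_nonneg ‹_› (hh _)
  have hτeven (n : ℕ) : τ (2 * n) = l * h n := by simp [τ]
  have hτodd (n : ℕ) : τ (2 * n + 1) = m * h n := by
    simp [τ, show (2 * n + 1) / 2 = n by lia]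
  have hTsucc (n : ℕ) : T (n + 1) - T n = τ n := by simp [T, Finset.sum_range_succ]
  have hmono : Monotone T := monotone_nat_of_le_succ fun n ↦ by linarith [hTsucc n, hτ n]
  have hTeven (n : ℕ) : T (2 * n) = (l + m) * ∑ k ∈ Finset.range n, h k := by
    induction n with
    | zero => simp [T]
    | succ n ih =>
      change T (2 * n + 1 + 1) = _
      rw [Finset.sum_range_succ]
      linarith [hTsucc (2 * n), hTsucc (2 * n + 1), hτeven n, hτodd n]
  have hS : Tendsto (fun n ↦ T (2 * n)) atTop atTop := by
    simpa only [hTeven] using hdiv.const_mul_atTop hlm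
  obtain ⟨u, Φ, hΦ, hΦ0, hΦsucc⟩ := exists_isTrajectory_of_switching_times L
    (fun k ↦ if Even k then i else j) (by simp [T]) hmono
    (tendsto_atTop_of_monotone_of_subseq hmono hS) v
  refine ⟨u, Φ, fun n ↦ T (2 * n), hΦ, hS, by simpa [T] using hΦ0, fun n ↦ ?_⟩
  change Φ (T (2 * n + 1 + 1)) = _
  rw [hΦsucc, hΦsucc, hTsucc, hTsucc, hτeven, hτodd]
  simp

end PiecewiseConstantLaw

section SingularConvexCombination

lemma dist_le_sum_of_nonexpansive {X : Type*} [PseudoMetricSpace X] {P : ℕ → X → X} {y : ℕ → X}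
    (hP : ∀ n x x', dist (P n x) (P n x') ≤ dist x x') (hy : ∀ n, y (n + 1) = P n (y n)) (n : ℕ) :
    dist (y n) (y 0) ≤ ∑ k ∈ Finset.range n, dist (P k (y 0)) (y 0) := by
  induction n with
  | zero => simp
  | succ n ih =>
    calc dist (y (n + 1)) (y 0) ≤ dist (P n (y n)) (P n (y 0)) + dist (P n (y 0)) (y 0) :=
          hy n ▸ dist_triangle _ _ _
      _ ≤ dist (y n) (y 0) + dist (P n (y 0)) (y 0) := by gcongr; exact hP _ _ _
      _ ≤ _ := by rw [Finset.sum_range_succ]; gcongr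

lemma exists_divergent_steps_sum_sq_lt {C ε : ℝ} (hC : 0 ≤ C) (hε : 0 < ε) :
    ∃ h : ℕ → ℝ, (∀ n, h n ∈ Icc (0 : ℝ) 1) ∧
      Tendsto (fun n ↦ ∑ k ∈ Finset.range n, h k) atTop atTop ∧
      ∃ ε' < ε, ∀ n, ∑ k ∈ Finset.range n, C * h k ^ 2 ≤ ε' := by
  let h (n : ℕ) : ℝ := 1 / ((n : ℝ) + 1)
  have hh (n : ℕ) : h n ∈ Icc (0 : ℝ) 1 := ⟨by positivity, by
    simpa only [h, one_div] using inv_le_one_of_one_le₀ (by simp)⟩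
  have hsq : Summable fun n ↦ C * h n ^ 2 := by
    have hshift := (summable_nat_add_iff 1).2 (Real.summable_one_div_nat_pow.2 one_lt_two)
    simpa [h] using hshift.mul_left C
  obtain ⟨N, hN⟩ := ((tendsto_sum_nat_add fun n ↦ C * h n ^ 2).eventually_lt_const hε).exists
  refine ⟨fun n ↦ h (n + N), fun n ↦ hh _, ?_, _, hN, fun n ↦ ?_⟩
  · refine (not_summable_iff_tendsto_nat_atTop_of_nonneg fun n ↦ (hh _).1).1 ?_
    rw [summable_nat_add_iff N (f := h)]
    exact (not_summable_iff_tendsto_nat_atTop_of_nonneg fun n ↦ (hh n).1).2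
      Real.tendsto_sum_range_one_div_nat_succ_atTop
  · exact ((summable_nat_add_iff N).2 hsq).sum_le_tsum _ fun k _ ↦ by positivity

variable {ι E : Type*} [NormedAddCommGroup E] [InnerProductSpace ℝ E] [CompleteSpace E]

lemma IsDissipative.norm_exp_smul_apply_le {A : E →L[ℝ] E} (hA : IsDissipative A) {t : ℝ}
    (ht : 0 ≤ t) (x : E) : ‖NormedSpace.exp (t • A) x‖ ≤ ‖x‖ := by
  have hderiv (s : ℝ) := (hasDerivAt_exp_smul_apply A x s).norm_sq
  have hanti : Antitone fun s : ℝ ↦ ‖NormedSpace.exp (s • A) x‖ ^ 2 :=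
    antitone_of_hasDerivAt_nonpos hderiv fun s ↦
      mul_nonpos_of_nonneg_of_nonpos two_pos.le (hA _)
  refine le_of_sq_le_sq ?_ (norm_nonneg _)
  simpa using hanti ht

theorem exists_isTrajectory_not_tendsto_zero [MeasurableSpace ι] {L : ι → E →L[ℝ] E} {i j : ι}
    (hi : IsDissipative (L i)) (hj : IsDissipative (L j)) {l m : ℝ} (hl : 0 ≤ l) (hm : 0 ≤ m)
    (hlm : 0 < l + m) {v : E} (hv : v ≠ 0) (hker : l • L i v + m • L j v = 0) :
    ∃ u Φ, IsTrajectory L u Φ ∧ ¬ Tendsto Φ atTop (𝓝 0) := by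
  obtain ⟨C, hC, hstep⟩ := exists_norm_exp_exp_sub_le hker
  obtain ⟨h, hh, hdiv, δ, hδ, hsum⟩ := exists_divergent_steps_sum_sq_lt hC (norm_pos_iff.2 hv)
  obtain ⟨u, Φ, S, hΦ, hS, rfl, hΦS⟩ :=
    exists_isTrajectory_alternating L i j hl hm hlm (fun n ↦ (hh n).1) hdiv v
  refine ⟨u, Φ, hΦ, fun hlim ↦ ?_⟩
  have hnonexp (n : ℕ) (x x' : E) :
      dist (NormedSpace.exp ((m * h n) • L j) (NormedSpace.exp ((l * h n) • L i) x))
        (NormedSpace.exp ((m * h n) • L j) (NormedSpace.exp ((l * h n) • L i) x')) ≤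
      dist x x' := by
    simp only [dist_eq_norm, ← map_sub]
    exact (hj.norm_exp_smul_apply_le (mul_nonneg hm (hh n).1) _).trans
      (hi.norm_exp_smul_apply_le (mul_nonneg hl (hh n).1) _)
  have hnear (n : ℕ) : dist (Φ (S n)) (Φ (S 0)) ≤ δ :=
    calc dist (Φ (S n)) (Φ (S 0)) ≤ _ :=
        dist_le_sum_of_nonexpansive (y := fun n ↦ Φ (S n)) hnonexp hΦS n
      _ ≤ ∑ k ∈ Finset.range n, C * h k ^ 2 :=
        Finset.sum_le_sum fun k _ ↦ (dist_eq_norm _ _).trans_le (hstep _ (hh k))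
      _ ≤ δ := hsum n
  have hlimdist := (hlim.comp hS).dist (tendsto_const_nhds (x := Φ (S 0)))
  rw [dist_zero_left] at hlimdist
  exact (le_of_tendsto' hlimdist hnear).not_gt hδ

end SingularConvexCombination

section Example

lemma isGUAS_iff_forall_isTrajectory {n : Type*} [Fintype n] [DecidableEq n]
    {B₀ B₁ : Matrix n n ℝ} :
    IsGUAS B₀ B₁ ↔ ∀ u Φ,
      IsTrajectory (fun i ↦ toEuclideanCLM (n := n) (𝕜 := ℝ) (![B₀, B₁] i)) u Φ →
        Tendsto Φ atTop (𝓝 0) := by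
  refine ⟨fun h u Φ hΦ ↦ h u hΦ.measurable (Φ 0) Φ hΦ.continuous hΦ.eq_add_integral,
    fun h u hu X Φ hΦ hX ↦ h u Φ ⟨hu, hΦ, ?_⟩⟩
  have h0 : Φ 0 = X := by simpa using hX 0 le_rfl
  exact h0 ▸ hX

/-- The two vector fields of the example: in the plane `z = 0` both rotate, with angular velocities
`-a` and `-b`, and they feed respectively `x` and `y` into the damped coordinate `z`. -/
def dampedRotation (a b d₀ d₁ : ℝ) (i : Fin 2) :
    EuclideanSpace ℝ (Fin 3) →L[ℝ] EuclideanSpace ℝ (Fin 3) :=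
  toEuclideanCLM (n := Fin 3) (𝕜 := ℝ)
    (![!![0, a, -1; -a, 0, 0; 1, 0, -d₀], !![0, b, 0; -b, 0, -1; 0, 1, -d₁]] i)

variable {a b d₀ d₁ : ℝ}

lemma dampedRotation_zero_apply (v : EuclideanSpace ℝ (Fin 3)) :
    dampedRotation a b d₀ d₁ 0 v = !₂[a * v 1 - v 2, -(a * v 0), v 0 - d₀ * v 2] := by
  ext k
  fin_cases k <;> simp [dampedRotation, mulVec, dotProduct, Fin.sum_univ_three, sub_eq_add_neg]

lemma dampedRotation_one_apply (v : EuclideanSpace ℝ (Fin 3)) :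
    dampedRotation a b d₀ d₁ 1 v = !₂[b * v 1, -(b * v 0) - v 2, v 1 - d₁ * v 2] := by
  ext k
  fin_cases k <;> simp [dampedRotation, mulVec, dotProduct, Fin.sum_univ_three, sub_eq_add_neg]

lemma inner_dampedRotation (i : Fin 2) (v : EuclideanSpace ℝ (Fin 3)) :
    inner ℝ v (dampedRotation a b d₀ d₁ i v) = -(![d₀, d₁] i * v 2 ^ 2) := by
  fin_cases i <;>
  · simp only [Fin.zero_eta, Fin.mk_one, dampedRotation_zero_apply, dampedRotation_one_apply,
      PiLp.inner_apply, RCLike.inner_apply, Real.ringHom_apply, Fin.sum_univ_three, cons_val]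
    ring

lemma isDissipative_dampedRotation (hd₀ : 0 ≤ d₀) (hd₁ : 0 ≤ d₁) (i : Fin 2) :
    IsDissipative (dampedRotation a b d₀ d₁ i) := fun v ↦ by
  rw [inner_dampedRotation, neg_nonpos]
  fin_cases i
  exacts [mul_nonneg hd₀ (sq_nonneg _), mul_nonneg hd₁ (sq_nonneg _)]

lemma inner_dampedRotation_eq_zero_iff (hd₀ : d₀ ≠ 0) (hd₁ : d₁ ≠ 0) {i : Fin 2}
    {v : EuclideanSpace ℝ (Fin 3)} :
    inner ℝ v (dampedRotation a b d₀ d₁ i v) = 0 ↔ v 2 = 0 := by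
  fin_cases i <;> simp [inner_dampedRotation, hd₀, hd₁]

/-- The first auxiliary function of the Matrosov argument. In the plane `z = 0` the derivative of
`y² - x²` along each field is a multiple of `xy`; the term in `z` cancels it there, and leaves a
multiple of the square of the coordinate fed into `z`. -/
def matrosovV (a b : ℝ) (v : EuclideanSpace ℝ (Fin 3)) : ℝ :=
  a * (v 1 ^ 2 - v 0 ^ 2 + 4 * (v 2 * (b * v 0 + a * v 1)))

/-- The second auxiliary function of the Matrosov argument, increasing along the rotations
near both coordinate axes of the plane `z = 0`. -/
def matrosovW (a : ℝ) (v : EuclideanSpace ℝ (Fin 3)) : ℝ :=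
  a * (v 0 * v 1 * (v 1 ^ 2 - v 0 ^ 2))

lemma contDiff_matrosovV (a b : ℝ) : ContDiff ℝ 1 (matrosovV a b) := by
  unfold matrosovV
  fun_prop

lemma contDiff_matrosovW (a : ℝ) : ContDiff ℝ 1 (matrosovW a) := by
  unfold matrosovW
  fun_prop

lemma fderiv_matrosovV_apply (a b : ℝ) (v w : EuclideanSpace ℝ (Fin 3)) :
    fderiv ℝ (matrosovV a b) v w =
      a * (2 * (v 1 * w 1 - v 0 * w 0) + 4 * (w 2 * (b * v 0 + a * v 1) +
        v 2 * (b * w 0 + a * w 1))) := by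
  have hx := PiLp.hasFDerivAt_apply (𝕜 := ℝ) 2 v 0
  have hy := PiLp.hasFDerivAt_apply (𝕜 := ℝ) 2 v 1
  have hz := PiLp.hasFDerivAt_apply (𝕜 := ℝ) 2 v 2
  have hV : HasFDerivAt (matrosovV a b) _ v := (((hy.pow 2).sub (hx.pow 2)).add
    ((hz.mul ((hx.const_mul b).add (hy.const_mul a))).const_mul 4)).const_mul a
  rw [hV.fderiv]
  simp only [_root_.add_apply, _root_.sub_apply, _root_.smul_apply, Pi.add_apply, PiLp.proj_apply,
    smul_eq_mul, nsmul_eq_mul, Nat.cast_ofNat, Nat.add_one_sub_one, pow_one]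
  ring

lemma fderiv_matrosovW_apply (a : ℝ) (v w : EuclideanSpace ℝ (Fin 3)) :
    fderiv ℝ (matrosovW a) v w =
      a * ((w 0 * v 1 + v 0 * w 1) * (v 1 ^ 2 - v 0 ^ 2) +
        2 * (v 0 * v 1 * (v 1 * w 1 - v 0 * w 0))) := by
  have hx := PiLp.hasFDerivAt_apply (𝕜 := ℝ) 2 v 0
  have hy := PiLp.hasFDerivAt_apply (𝕜 := ℝ) 2 v 1
  have hW : HasFDerivAt (matrosovW a) _ v :=
    ((hx.mul hy).mul ((hy.pow 2).sub (hx.pow 2))).const_mul a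
  rw [hW.fderiv]
  simp only [_root_.add_apply, _root_.sub_apply, _root_.smul_apply, Pi.mul_apply, Pi.sub_apply,
    PiLp.proj_apply, smul_eq_mul, nsmul_eq_mul, Nat.cast_ofNat, Nat.add_one_sub_one, pow_one]
  ring

lemma fderiv_matrosovV_dampedRotation (i : Fin 2) {v : EuclideanSpace ℝ (Fin 3)} (hz : v 2 = 0) :
    fderiv ℝ (matrosovV a b) v (dampedRotation a b d₀ d₁ i v) =
      ![4 * (a * b * v 0 ^ 2), 4 * (a * a * v 1 ^ 2)] i := by
  fin_cases i <;>
  · simp only [Fin.zero_eta, Fin.mk_one, fderiv_matrosovV_apply, dampedRotation_zero_apply,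
      dampedRotation_one_apply, hz, cons_val]
    ring

lemma fderiv_matrosovW_dampedRotation (i : Fin 2) {v : EuclideanSpace ℝ (Fin 3)} (hz : v 2 = 0) :
    fderiv ℝ (matrosovW a) v (dampedRotation a b d₀ d₁ i v) =
      ![a * a, a * b] i * ((v 1 ^ 2 - v 0 ^ 2) ^ 2 - 4 * (v 0 * v 1) ^ 2) := by
  fin_cases i <;>
  · simp only [Fin.zero_eta, Fin.mk_one, fderiv_matrosovW_apply, dampedRotation_zero_apply,
      dampedRotation_one_apply, hz, cons_val]
    ring

theorem tendsto_zero_of_isTrajectory_dampedRotation (hd₀ : 0 < d₀) (hd₁ : 0 < d₁)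
    (hab : 0 < a * b) {u : ℝ → Fin 2} {Φ : ℝ → EuclideanSpace ℝ (Fin 3)}
    (hΦ : IsTrajectory (dampedRotation a b d₀ d₁) u Φ) : Tendsto Φ atTop (𝓝 0) := by
  have ha : 0 < a * a := mul_self_pos.2 (left_ne_zero_of_mul hab.ne')
  refine hΦ.tendsto_zero_of_matrosov (isDissipative_dampedRotation hd₀.le hd₁.le)
    (contDiff_matrosovV a b) (contDiff_matrosovW a) (fun i v hinner ↦ ?_)
    fun i v hv hinner hV ↦ ?_
  · have hz := (inner_dampedRotation_eq_zero_iff hd₀.ne' hd₁.ne').1 hinner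
    rw [fderiv_matrosovV_dampedRotation i hz]
    fin_cases i <;> dsimp <;> positivity
  · have hz := (inner_dampedRotation_eq_zero_iff hd₀.ne' hd₁.ne').1 hinner
    rw [fderiv_matrosovV_dampedRotation i hz] at hV
    have hxy : v 0 = 0 ∨ v 1 = 0 := by
      fin_cases i
      · exact .inl (by simpa [hab.ne'] using hV)
      · exact .inr (by simpa [ha.ne'] using hV)
    have hne : v 1 ^ 2 - v 0 ^ 2 ≠ 0 := fun h ↦ hv <| by
      ext k
      rcases hxy with h0 | h1 <;> fin_cases k <;> simp_all
    have hcoef : 0 < ![a * a, a * b] i := by fin_cases i <;> assumption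
    rw [fderiv_matrosovW_dampedRotation i hz, mul_eq_zero.2 hxy, zero_pow two_ne_zero, mul_zero,
      sub_zero]
    exact mul_pos hcoef (by positivity)

lemma exists_nonneg_mul_add_mul_eq_zero (hab : a * b ≤ 0) :
    ∃ l m : ℝ, 0 ≤ l ∧ 0 ≤ m ∧ 0 < l + m ∧ l * a + m * b = 0 := by
  rcases eq_or_ne a 0 with rfl | ha
  · exact ⟨1, 0, by simp⟩
  · refine ⟨|b|, |a|, abs_nonneg b, abs_nonneg a, by positivity, ?_⟩
    rcases mul_nonpos_iff.1 hab with ⟨ha0, hb0⟩ | ⟨ha0, hb0⟩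
    · rw [abs_of_nonneg ha0, abs_of_nonpos hb0]
      ring
    · rw [abs_of_nonpos ha0, abs_of_nonneg hb0]
      ring

lemma smul_dampedRotation_add_smul_dampedRotation_eq_zero {l m : ℝ} (hlm : l * a + m * b = 0) :
    l • dampedRotation a b d₀ d₁ 0 !₂[m, -l, 0] + m • dampedRotation a b d₀ d₁ 1 !₂[m, -l, 0] =
      0 := by
  rw [dampedRotation_zero_apply, dampedRotation_one_apply]
  ext k
  fin_cases k <;>
    simp only [Fin.zero_eta, Fin.mk_one, Fin.reduceFinMk, PiLp.add_apply, PiLp.smul_apply,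
      PiLp.zero_apply, smul_eq_mul, cons_val]
  · linear_combination -l * hlm
  · linear_combination -m * hlm
  · ring

theorem exists_isTrajectory_dampedRotation_not_tendsto_zero (hd₀ : 0 ≤ d₀) (hd₁ : 0 ≤ d₁)
    (hab : a * b ≤ 0) :
    ∃ u Φ, IsTrajectory (dampedRotation a b d₀ d₁) u Φ ∧ ¬ Tendsto Φ atTop (𝓝 0) := by
  obtain ⟨l, m, hl, hm, hlm, hcomb⟩ := exists_nonneg_mul_add_mul_eq_zero hab
  have hdiss := isDissipative_dampedRotation (a := a) (b := b) hd₀ hd₁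
  refine exists_isTrajectory_not_tendsto_zero (hdiss 0) (hdiss 1) hl hm hlm (fun h0 ↦ ?_)
    (smul_dampedRotation_add_smul_dampedRotation_eq_zero hcomb)
  have hm0 : m = 0 := by simpa using congrArg (· 0) h0
  have hl0 : l = 0 := by simpa using congrArg (· 1) h0
  exact hlm.ne' (by rw [hl0, hm0, add_zero])

end Example

/-- For `a, b ∈ ℝ` and `d₀, d₁ > 0`, the switched system defined by
`B₀ = [[0, a, -1],[-a, 0, 0],[1, 0, -d₀]]` and `B₁ = [[0, b, 0],[-b, 0, -1],[0, 1, -d₁]]`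
is GUAS if and only if `ab > 0`. -/
theorem isGUAS_dimK_two_example_iff (a b d₀ d₁ : ℝ) (hd₀ : 0 < d₀) (hd₁ : 0 < d₁) :
    IsGUAS !![0, a, -1; -a, 0, 0; 1, 0, -d₀] !![0, b, 0; -b, 0, -1; 0, 1, -d₁] ↔
      0 < a * b := by
  rw [isGUAS_iff_forall_isTrajectory]
  refine ⟨fun hGUAS ↦ ?_, fun hab u Φ ↦ tendsto_zero_of_isTrajectory_dampedRotation hd₀ hd₁ hab⟩
  by_contra! hab
  obtain ⟨u, Φ, hΦ, hlim⟩ := exists_isTrajectory_dampedRotation_not_tendsto_zero hd₀.le hd₁.le hab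
  exact hlim (hGUAS u Φ hΦ)

end
end
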